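/- arXiv:2001.09825 — 7 statements merged into one kernel-verified Lean document; each statement's English description precedes it below -/
import Mathlib

section
/- Let n ≥ 2 be even and g ≥ 1. Then the coinvariants module (H^{⊗n})_{D_{2n}} is a free ℤ-module (in particular it is torsion-free), of rank (1/2)·N_{2g}(n) + (1/4)·(2g+1)·(2g)^{n/2}. -/
/-- Words of length `n` in the alphabet `Fin (2*g)`, i.e. index sets of basis tensors
of the `n`-fold tensor power of the free `ℤ`-module `H` on `2g` generators. -/
abbrev DWord (g n : ℕ) : Type := ZMod n → Fin (2 * g)

/-- The action of the generator `x` of the dihedral group `D_{2n}` on `H^{⊗n}`: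
`x·(a_1⊗⋯⊗a_n) = a_n⊗a_1⊗⋯⊗a_{n-1}` (cyclic rotation of basis tensors). -/
noncomputable def rotMap (g n : ℕ) : Module.End ℤ ((DWord g n) →₀ ℤ) :=
  Finsupp.lmapDomain ℤ ℤ (fun w : DWord g n => fun i => w (i - 1))

/-- The action of the generator `y` of the dihedral group `D_{2n}` on `H^{⊗n}`:
`y·(a_1⊗⋯⊗a_n) = (-1)^n · (a_n⊗⋯⊗a_1)` (reversal with sign). -/
noncomputable def revMap (g n : ℕ) : Module.End ℤ ((DWord g n) →₀ ℤ) :=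
  ((-1 : ℤ) ^ n) • Finsupp.lmapDomain ℤ ℤ (fun w : DWord g n => fun i => w (-i - 1))

/-- The submodule generated by all `v - σ·v` where `σ` ranges over the elements
`x^k` and `x^k y` of the dihedral group `D_{2n}`. -/
noncomputable def dihedralAug (g n : ℕ) : Submodule ℤ ((DWord g n) →₀ ℤ) :=
  Submodule.span ℤ {u | ∃ (k : ℕ) (v : (DWord g n) →₀ ℤ),
    u = v - (rotMap g n ^ k) v ∨ u = v - ((rotMap g n ^ k) * revMap g n) v}

/-- The coinvariants `(H^{⊗n})_{D_{2n}}`. -/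
abbrev DCoinv (g n : ℕ) := ((DWord g n) →₀ ℤ) ⧸ dihedralAug g n

open DihedralGroup in
instance dAct (g n : ℕ) : MulAction (DihedralGroup n) (DWord g n) where
  smul σ w := match σ with
    | r i => fun k => w (k - i)
    | sr i => fun k => w (-k - 1 - i)
  one_smul w := by
    change (fun k => w (k - 0)) = w
    simp
  mul_smul a b w := by
    rcases a with i | i <;> rcases b with j | j
    · change (fun k => w (k - (i + j))) = (fun k => w (k - i - j))
      funext k; congr 1; ring
    · change (fun k => w (-k - 1 - (j - i))) = (fun k => w (-(k - i) - 1 - j))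
      funext k; congr 1; ring
    · change (fun k => w (-k - 1 - (i + j))) = (fun k => w (-k - 1 - i - j))
      funext k; congr 1; ring
    · change (fun k => w (k - (j - i))) = (fun k => w (-(-k - 1 - i) - 1 - j))
      funext k; congr 1; ring

lemma r_smul_def (g n : ℕ) (i : ZMod n) (w : DWord g n) :
    DihedralGroup.r i • w = fun k => w (k - i) := rfl

lemma sr_smul_def (g n : ℕ) (i : ZMod n) (w : DWord g n) :
    DihedralGroup.sr i • w = fun k => w (-k - 1 - i) := rfl

lemma rot_pow_apply (g n : ℕ) (k : ℕ) (v : DWord g n →₀ ℤ) :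
    (rotMap g n ^ k) v =
      Finsupp.lmapDomain ℤ ℤ (fun w : DWord g n => DihedralGroup.r (k : ZMod n) • w) v := by
  induction k with
  | zero => 
    simp only [pow_zero, Module.End.one_apply, Nat.cast_zero, DihedralGroup.r_zero, one_smul]
    exact (Finsupp.mapDomain_id (v := v)).symm
  | succ k ih =>
    rw [pow_succ', Module.End.mul_apply, ih, rotMap]
    simp only [Finsupp.lmapDomain_apply]
    rw [← Finsupp.mapDomain_comp]
    congr 1
    funext w j
    simp only [Function.comp, r_smul_def]
    congr 1
    push_cast; ring

lemma rev_apply (g n : ℕ) (hev : Even n) (v : DWord g n →₀ ℤ) :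
    revMap g n v =
      Finsupp.lmapDomain ℤ ℤ (fun w : DWord g n => DihedralGroup.sr (0 : ZMod n) • w) v := by
  simp only [revMap, hev.neg_one_pow, one_smul, sr_smul_def, sub_zero]

lemma rot_rev_apply (g n : ℕ) (hev : Even n) (k : ℕ) (v : DWord g n →₀ ℤ) :
    (rotMap g n ^ k * revMap g n) v =
      Finsupp.lmapDomain ℤ ℤ (fun w : DWord g n => DihedralGroup.sr (-(k : ZMod n)) • w) v := by
  rw [Module.End.mul_apply, rev_apply g n hev, rot_pow_apply]
  simp only [Finsupp.lmapDomain_apply]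
  rw [← Finsupp.mapDomain_comp]
  congr 1
  funext w
  simp only [Function.comp, ← mul_smul, DihedralGroup.r_mul_sr, zero_sub]

lemma aug_mem (g n : ℕ) [NeZero n] (hev : Even n) (σ : DihedralGroup n) (v : DWord g n →₀ ℤ) :
    v - Finsupp.lmapDomain ℤ ℤ (fun w : DWord g n => σ • w) v ∈ dihedralAug g n := by
  apply Submodule.subset_span
  rcases σ with i | i
  · refine ⟨i.val, v, Or.inl ?_⟩
    rw [rot_pow_apply, ZMod.natCast_zmod_val]
  · refine ⟨(-i).val, v, Or.inr ?_⟩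
    rw [rot_rev_apply g n hev, ZMod.natCast_zmod_val, neg_neg]

abbrev DOrb (g n : ℕ) := Quotient (MulAction.orbitRel (DihedralGroup n) (DWord g n))

lemma aug_eq_ker (g n : ℕ) [NeZero n] (hev : Even n) :
    dihedralAug g n =
      LinearMap.ker (Finsupp.lmapDomain ℤ ℤ (fun w : DWord g n => (⟦w⟧ : DOrb g n))) := by
  have key : ∀ (σ : DihedralGroup n) (v : DWord g n →₀ ℤ),
      v - Finsupp.lmapDomain ℤ ℤ (fun w : DWord g n => σ • w) v ∈
      LinearMap.ker (Finsupp.lmapDomain ℤ ℤ (fun w : DWord g n => (⟦w⟧ : DOrb g n))) := by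
    intro σ v
    rw [LinearMap.mem_ker, map_sub, sub_eq_zero]
    simp only [Finsupp.lmapDomain_apply]
    rw [← Finsupp.mapDomain_comp]
    congr 1
    funext w
    exact (Quotient.sound (s := MulAction.orbitRel (DihedralGroup n) (DWord g n)) ⟨σ, rfl⟩).symm
  apply le_antisymm
  · refine Submodule.span_le.2 ?_
    rintro u ⟨k, v, rfl | rfl⟩
    · rw [rot_pow_apply]; exact key _ _
    · rw [rot_rev_apply g n hev]; exact key _ _
  · intro v hv
    have h : ∀ v : DWord g n →₀ ℤ, v - Finsupp.lmapDomain ℤ ℤ (fun o : DOrb g n => o.out)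
        (Finsupp.lmapDomain ℤ ℤ (fun w : DWord g n => (⟦w⟧ : DOrb g n)) v) ∈ dihedralAug g n := by
      intro v
      induction v using Finsupp.induction_linear with
      | zero => simp
      | add a b ha hb =>
        rw [map_add, map_add, add_sub_add_comm]
        exact add_mem ha hb
      | single w a =>
        simp only [Finsupp.lmapDomain_apply, Finsupp.mapDomain_single]
        obtain ⟨σ, hσ⟩ : (⟦w⟧ : DOrb g n).out ∈ MulAction.orbit (DihedralGroup n) w :=
          Quotient.mk_out (s := MulAction.orbitRel (DihedralGroup n) (DWord g n)) w
        have := aug_mem g n hev σ (Finsupp.single w a)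
        simp only [Finsupp.lmapDomain_apply, Finsupp.mapDomain_single] at this
        rw [← hσ]
        exact this
    have := h v
    rw [LinearMap.mem_ker.1 hv] at this
    simpa using this

noncomputable def coinvEquiv (g n : ℕ) [NeZero n] (hev : Even n) :
    DCoinv g n ≃ₗ[ℤ] (DOrb g n →₀ ℤ) :=
  (Submodule.quotEquivOfEq _ _ (aug_eq_ker g n hev)).trans
    (LinearMap.quotKerEquivOfSurjective _
      (Finsupp.mapDomain_surjective Quotient.mk_surjective))

lemma card_factor {X T A : Type*} [Finite T] (π : X → T) (hπ : Function.Surjective π)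
    (P : (X → A) → Prop) (hP : ∀ w, P w ↔ ∀ x y, π x = π y → w x = w y) :
    Nat.card {w // P w} = Nat.card A ^ Nat.card T := by
  rw [← Nat.card_fun]
  refine Nat.card_congr (Equiv.symm (Equiv.ofBijective
    (fun f : T → A => (⟨f ∘ π, (hP _).2 fun x y h => by simp [h]⟩ : {w // P w})) ⟨?_, ?_⟩))
  · intro f f' h
    exact hπ.injective_comp_right (Subtype.ext_iff.1 h)
  · rintro ⟨w, hw⟩
    refine ⟨fun t => w (hπ t).choose, Subtype.ext (funext fun x => ?_)⟩
    exact (hP w).1 hw _ _ (hπ (π x)).choose_spec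

lemma card_fix_r (g n : ℕ) [NeZero n] (i : ZMod n) :
    Nat.card (MulAction.fixedBy (DWord g n) (DihedralGroup.r i)) =
      (2 * g) ^ (n / addOrderOf i) := by
  have h := card_factor (A := Fin (2 * g))
    (QuotientAddGroup.mk (s := AddSubgroup.zmultiples i)) QuotientAddGroup.mk_surjective
    (fun w => DihedralGroup.r i • w = w) ?_
  · have h2 := AddSubgroup.card_eq_card_quotient_mul_card_addSubgroup (AddSubgroup.zmultiples i)
    rw [Nat.card_zmod, Nat.card_zmultiples] at h2
    have h3 : 0 < addOrderOf i := addOrderOf_pos i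
    have h4 : Nat.card (ZMod n ⧸ AddSubgroup.zmultiples i) = n / addOrderOf i :=
      (Nat.div_eq_of_eq_mul_left h3 h2).symm
    rw [h4, Nat.card_fin] at h
    exact h
  · intro w
    rw [r_smul_def]
    constructor
    · intro hw x y hxy
      rw [QuotientAddGroup.eq, AddSubgroup.mem_zmultiples_iff] at hxy
      obtain ⟨k, hk⟩ := hxy
      have hp : Function.Periodic w i := fun x => by
        have := congrFun hw (x + i)
        simpa using this.symm
      have := hp.zsmul k x
      rw [hk] at this
      simpa using this.symm
    · intro hw
      funext k
      apply hw
      rw [QuotientAddGroup.eq]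
      simp

lemma sum_fix_r (g n : ℕ) [NeZero n] :
    ∑ i : ZMod n, Nat.card (MulAction.fixedBy (DWord g n) (DihedralGroup.r i)) =
      ∑ d ∈ n.divisors, d.totient * (2 * g) ^ (n / d) := by
  simp only [card_fix_r]
  rw [← Finset.sum_fiberwise_of_maps_to (s := Finset.univ) (t := n.divisors)
    (g := fun i : ZMod n => addOrderOf i)]
  · refine Finset.sum_congr rfl fun d hd => ?_
    rw [Finset.sum_congr rfl (g := fun _ => (2 * g) ^ (n / d))
      (fun i hi => by rw [(Finset.mem_filter.1 hi).2]), Finset.sum_const, smul_eq_mul]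
    congr 1
    apply IsAddCyclic.card_addOrderOf_eq_totient
    rw [ZMod.card]
    exact Nat.dvd_of_mem_divisors hd
  · intro i _
    rw [Nat.mem_divisors]
    refine ⟨?_, NeZero.ne n⟩
    have := addOrderOf_dvd_natCard i
    rwa [Nat.card_zmod] at this

lemma natAbs_vma_eq (n : ℕ) [NeZero n] (a b : ZMod n)
    (h : a.valMinAbs.natAbs = b.valMinAbs.natAbs) : a = b ∨ a = -b := by
  rw [← ZMod.coe_valMinAbs a, ← ZMod.coe_valMinAbs b]
  rcases Int.natAbs_eq_natAbs_iff.1 h with h | h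
  · left; rw [h]
  · right; rw [h]; push_cast; rfl

lemma card_refl_even (q n : ℕ) [NeZero n] (b : ZMod n) :
    Nat.card {w : ZMod n → Fin q // ∀ k, w (2 * b - k) = w k} = q ^ (n / 2 + 1) := by
  have h := card_factor (A := Fin q)
    (fun k : ZMod n => (⟨(k - b).valMinAbs.natAbs,
      Nat.lt_succ_of_le (ZMod.natAbs_valMinAbs_le _)⟩ : Fin (n / 2 + 1))) ?_
    (fun w => ∀ k, w (2 * b - k) = w k) ?_
  · rwa [Nat.card_fin, Nat.card_fin] at h
  · rintro ⟨t, ht⟩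
    refine ⟨t + b, ?_⟩
    rw [Fin.mk.injEq, add_sub_cancel_right, ZMod.valMinAbs_natCast_of_le_half (by omega)]
    simp
  · intro w
    constructor
    · intro hw x y hxy
      rcases natAbs_vma_eq n _ _ (Fin.mk.inj hxy) with h | h
      · rw [sub_left_injective h]
      · rw [← hw x]
        congr 1
        linear_combination -h
    · intro hw k
      apply hw
      rw [Fin.mk.injEq, ← ZMod.natAbs_valMinAbs_neg]
      congr 2
      ring

lemma val_neg_one_sub (n : ℕ) [NeZero n] (k : ZMod n) : (-1 - k).val = n - 1 - k.val := by
  have hk := k.val_lt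
  have : -1 - k = ((n - 1 - k.val : ℕ) : ZMod n) := by
    rw [Nat.sub_sub, Nat.cast_sub (by omega)]
    push_cast
    rw [ZMod.natCast_self, ZMod.natCast_zmod_val]
    ring
  rw [this, ZMod.val_natCast_of_lt (by omega)]

lemma card_refl_odd (q n : ℕ) [NeZero n] (hev : Even n) (b : ZMod n) :
    Nat.card {w : ZMod n → Fin q // ∀ k, w (2 * b + 1 - k) = w k} = q ^ (n / 2) := by
  obtain ⟨m, hm⟩ := hev
  have hn2 : n / 2 = m := by omega
  rw [hn2]
  have h := card_factor (A := Fin q)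
    (fun k : ZMod n => (⟨min (k - b - 1).val (n - 1 - (k - b - 1).val), by
      have := (k - b - 1).val_lt; omega⟩ : Fin m)) ?_
    (fun w => ∀ k, w (2 * b + 1 - k) = w k) ?_
  · rwa [Nat.card_fin, Nat.card_fin] at h
  · rintro ⟨t, ht⟩
    refine ⟨t + b + 1, ?_⟩
    have : (t + b + 1 - b - 1 : ZMod n) = t := by ring
    rw [Fin.mk.injEq, this, ZMod.val_natCast_of_lt (by omega)]
    omega
  · intro w
    have e : ∀ k : ZMod n, 2 * b + 1 - k - b - 1 = -1 - (k - b - 1) := fun k => by ring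
    constructor
    · intro hw x y hxy
      have hxy := Fin.mk.inj hxy
      have h1 := (x - b - 1).val_lt
      have h2 := (y - b - 1).val_lt
      have h3 := val_neg_one_sub n (y - b - 1)
      have : (x - b - 1).val = (y - b - 1).val ∨ (x - b - 1).val = (-1 - (y - b - 1)).val := by
        omega
      rcases this with h | h
      · have h := ZMod.val_injective n h
        congr 1
        linear_combination h
      · have h := ZMod.val_injective n h
        rw [← hw y]
        congr 1
        linear_combination h
    · intro hw k
      apply hw
      rw [Fin.mk.injEq, e, val_neg_one_sub]
      have h1 := (k - b - 1).val_lt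
      omega

lemma sum_fix_sr (g n : ℕ) [NeZero n] (hev : Even n) :
    2 * ∑ i : ZMod n, Nat.card (MulAction.fixedBy (DWord g n) (DihedralGroup.sr i)) =
      n * (2 * g + 1) * (2 * g) ^ (n / 2) := by
  set F : ZMod n → ℕ := fun c =>
    Nat.card {w : ZMod n → Fin (2 * g) // ∀ k, w (c - k) = w k} with hF
  have h1 : ∀ i : ZMod n,
      Nat.card (MulAction.fixedBy (DWord g n) (DihedralGroup.sr i)) = F (-1 - i) := by
    intro i
    refine Nat.card_congr (Equiv.subtypeEquivRight fun w => ?_)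
    rw [MulAction.mem_fixedBy, sr_smul_def, funext_iff]
    refine forall_congr' fun k => ?_
    rw [show -k - 1 - i = -1 - i - k by ring]
  have h2 : ∑ i : ZMod n, F (-1 - i) = ∑ c, F c := (Equiv.subLeft (-1 : ZMod n)).sum_comp F
  have h3 : ∑ c : ZMod n, F (c + 1) = ∑ c, F c := Equiv.sum_comp (Equiv.addRight (1 : ZMod n)) F
  have he : ∀ b, F (2 * b) = (2 * g) ^ (n / 2 + 1) := fun b => card_refl_even _ _ b
  have ho : ∀ b, F (2 * b + 1) = (2 * g) ^ (n / 2) := fun b => card_refl_odd _ _ hev b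
  have h4 : ∀ c, F c + F (c + 1) = (2 * g + 1) * (2 * g) ^ (n / 2) := by
    intro c
    rcases Nat.even_or_odd' c.val with ⟨k, hk | hk⟩
    · have hc : c = 2 * (k : ZMod n) := by
        rw [← ZMod.natCast_zmod_val c, hk]; push_cast; rfl
      rw [hc, he, ho]; ring
    · have hc : c = 2 * (k : ZMod n) + 1 := by
        rw [← ZMod.natCast_zmod_val c, hk]; push_cast; rfl
      rw [hc, ho, show (2 * (k : ZMod n) + 1 + 1) = 2 * ((k : ZMod n) + 1) by ring, he]; ring
  simp only [h1]
  rw [h2, two_mul]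
  nth_rewrite 2 [← h3]
  rw [← Finset.sum_add_distrib]
  simp only [h4]
  simp [ZMod.card, mul_assoc]

lemma sum_dihedral (n : ℕ) [NeZero n] (f : DihedralGroup n → ℕ) :
    ∑ σ, f σ = ∑ i, f (DihedralGroup.r i) + ∑ i, f (DihedralGroup.sr i) := by
  let e : ZMod n ⊕ ZMod n ≃ DihedralGroup n :=
    { toFun := Sum.elim DihedralGroup.r DihedralGroup.sr
      invFun := fun σ => match σ with
        | .r i => Sum.inl i
        | .sr i => Sum.inr i
      left_inv := by rintro (i | i) <;> rfl
      right_inv := by rintro (i | i) <;> rfl }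
  rw [← e.sum_comp, Fintype.sum_sum_type]
  rfl

/-- For `n ≥ 2` even and `g ≥ 1`, the coinvariants `(H^{⊗n})_{D_{2n}}` form a free
`ℤ`-module of rank `(1/2)·N_{2g}(n) + (1/4)·(2g+1)·(2g)^{n/2}`, where
`N_q(n) = (1/n)·Σ_{d∣n} φ(d)·q^{n/d}`.  (The rank identity is stated multiplied
through by `4n` to avoid denominators.) -/
theorem stmt_0 (g n : ℕ) (hg : 1 ≤ g) (hn : 2 ≤ n) (hev : Even n) :
    Module.Free ℤ (DCoinv g n) ∧
    4 * n * Module.finrank ℤ (DCoinv g n) =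
      2 * (∑ d ∈ n.divisors, d.totient * (2 * g) ^ (n / d)) +
        n * (2 * g + 1) * (2 * g) ^ (n / 2) := by
  have : NeZero n := ⟨by omega⟩
  classical
  have e := coinvEquiv g n hev
  refine ⟨Module.Free.of_equiv e.symm, ?_⟩
  have : Fintype (DOrb g n) := Fintype.ofFinite _
  have hb := MulAction.sum_card_fixedBy_eq_card_orbits_mul_card_group
    (DihedralGroup n) (DWord g n)
  rw [DihedralGroup.card, sum_dihedral] at hb
  simp only [← Nat.card_eq_fintype_card] at hb
  rw [sum_fix_r] at hb
  have hs := sum_fix_sr g n hev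
  have hr : Module.finrank ℤ (DCoinv g n) = Nat.card (DOrb g n) := by
    rw [e.finrank_eq, Module.finrank_finsupp_self, Nat.card_eq_fintype_card]
  rw [hr]
  have hb' := hb
  change _ = Nat.card (DOrb g n) * _ at hb'
  linarith
end

section
/- Let n ≥ 3 be odd and g ≥ 1. Then the free rank of the ℤ-module (H^{⊗n})_{D_{2n}} (i.e. the dimension over ℚ of (H^{⊗n})_{D_{2n}} ⊗ ℚ) equals (1/2)·N_{2g}(n) − (1/2)·(2g)^{(n+1)/2}. -/
open TensorProduct

section Aux

variable {n q : ℕ}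

def auxSh (k : ZMod n) (w : ZMod n → Fin q) : ZMod n → Fin q := fun i => w (i - k)

def auxRf (k : ZMod n) (w : ZMod n → Fin q) : ZMod n → Fin q := fun i => w (k - i)

lemma auxSh_sh (k l : ZMod n) (w : ZMod n → Fin q) : auxSh k (auxSh l w) = auxSh (k + l) w := by
  funext i; simp only [auxSh]; congr 1; ring

lemma auxRf_sh (k l : ZMod n) (w : ZMod n → Fin q) : auxRf k (auxSh l w) = auxRf (k - l) w := by
  funext i; simp only [auxSh, auxRf]; congr 1; ring

lemma auxSh_rf (k l : ZMod n) (w : ZMod n → Fin q) : auxSh k (auxRf l w) = auxRf (k + l) w := by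
  funext i; simp only [auxSh, auxRf]; congr 1; ring

lemma auxRf_rf (k l : ZMod n) (w : ZMod n → Fin q) : auxRf k (auxRf l w) = auxSh (k - l) w := by
  funext i; simp only [auxSh, auxRf]; congr 1; ring

def auxS (n q : ℕ) : Submodule ℚ ((ZMod n → Fin q) → ℚ) where
  carrier := {f | ∀ w, f (auxSh 1 w) = f w ∧ f (auxRf (-1) w) = - f w}
  add_mem' := by
    intro a b ha hb w
    simp only [Pi.add_apply, (ha w).1, (ha w).2, (hb w).1, (hb w).2]
    exact ⟨trivial, by ring⟩
  zero_mem' := by intro w; simp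
  smul_mem' := by
    intro c a ha w
    simp only [Pi.smul_apply, (ha w).1, (ha w).2]
    exact ⟨trivial, by simp⟩

lemma auxS_sh [NeZero n] {f : (ZMod n → Fin q) → ℚ} (hf : f ∈ auxS n q) (k : ZMod n)
    (w : ZMod n → Fin q) : f (auxSh k w) = f w := by
  have h : ∀ m : ℕ, f (auxSh (m : ZMod n) w) = f w := by
    intro m
    induction m with
    | zero => congr 1; funext i; simp [auxSh]
    | succ m ih =>
      rw [← ih, ← (hf (auxSh (m : ZMod n) w)).1, auxSh_sh]
      congr 2; push_cast; ring
  simpa using h k.val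

lemma auxS_rf [NeZero n] {f : (ZMod n → Fin q) → ℚ} (hf : f ∈ auxS n q) (k : ZMod n)
    (w : ZMod n → Fin q) : f (auxRf k w) = - f w := by
  rw [← (hf w).2, ← auxS_sh hf (k + 1) (auxRf (-1) w), auxSh_rf]
  congr 2; ring

noncomputable def auxE (n q : ℕ) [NeZero n] :
    ((ZMod n → Fin q) → ℚ) →ₗ[ℚ] ((ZMod n → Fin q) → ℚ) :=
  (1 / (2 * n : ℚ)) • (∑ k : ZMod n, LinearMap.funLeft ℚ ℚ (auxSh k)
    - ∑ k : ZMod n, LinearMap.funLeft ℚ ℚ (auxRf k))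

lemma auxE_apply [NeZero n] (f : (ZMod n → Fin q) → ℚ) (w) :
    auxE n q f w = (1 / (2 * n : ℚ)) *
      (∑ k : ZMod n, f (auxSh k w) - ∑ k : ZMod n, f (auxRf k w)) := by
  simp [auxE, LinearMap.sum_apply, Finset.sum_apply, LinearMap.funLeft_apply]

lemma auxE_isProj [NeZero n] : LinearMap.IsProj (auxS n q) (auxE n q) := by
  have hn : (n : ℚ) ≠ 0 := by exact_mod_cast NeZero.ne n
  constructor
  · intro f w
    constructor
    · simp only [auxE_apply, auxSh_sh, auxRf_sh]
      rw [Fintype.sum_equiv (Equiv.addRight (1 : ZMod n)) (fun k => f (auxSh (k + 1) w))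
        (fun k => f (auxSh k w)) (fun _ => rfl),
        Fintype.sum_equiv (Equiv.subRight (1 : ZMod n)) (fun k => f (auxRf (k - 1) w))
        (fun k => f (auxRf k w)) (fun _ => rfl)]
    · simp only [auxE_apply, auxSh_rf, auxRf_rf]
      rw [Fintype.sum_equiv (Equiv.addRight (-1 : ZMod n)) (fun k => f (auxRf (k + -1) w))
        (fun k => f (auxRf k w)) (fun _ => rfl),
        Fintype.sum_equiv (Equiv.subRight (-1 : ZMod n)) (fun k => f (auxSh (k - -1) w))
        (fun k => f (auxSh k w)) (fun _ => rfl)]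
      ring
  · intro f hf
    funext w
    rw [auxE_apply]
    simp only [auxS_sh hf, auxS_rf hf, Finset.sum_const, Finset.card_univ, ZMod.card, nsmul_eq_mul]
    field_simp
    ring

lemma auxTrace {W : Type*} [Fintype W] [DecidableEq W] (τ : W → W) :
    LinearMap.trace ℚ (W → ℚ) (LinearMap.funLeft ℚ ℚ τ) =
      (Fintype.card {w // τ w = w} : ℚ) := by
  rw [← Matrix.toLin'_toMatrix' (LinearMap.funLeft ℚ ℚ τ), Matrix.trace_toLin'_eq, Matrix.trace,
    Fintype.card_subtype, Finset.card_filter]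
  push_cast
  refine Finset.sum_congr rfl fun w _ => ?_
  simp [LinearMap.toMatrix'_apply, LinearMap.funLeft_apply, Pi.single_apply]

lemma auxSh_fix_iff (k : ZMod n) (w : ZMod n → Fin q) :
    auxSh k w = w ↔ ∀ a b : ZMod n, -a + b ∈ AddSubgroup.zmultiples k → w a = w b := by
  constructor
  · intro h a b hab
    obtain ⟨m, hm⟩ := AddSubgroup.mem_zmultiples_iff.1 hab
    have key : ∀ (m : ℤ) (a : ZMod n), w (a + m • k) = w a := by
      intro m
      induction m using Int.induction_on with
      | zero => simp
      | succ i ih =>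
        intro a
        rw [← ih a, ← congrFun h (a + ((i : ℤ) + 1) • k)]
        simp only [auxSh]; congr 1; rw [add_smul]; simp [← add_assoc]
      | pred i ih =>
        intro a
        rw [← ih a, ← congrFun h (a + (-(i : ℤ)) • k)]
        simp only [auxSh]; congr 1; rw [sub_smul, one_smul]; abel
    rw [← key m a, hm]; congr 1; abel
  · intro h
    funext i
    refine h _ _ ?_
    rw [show -(i - k) + i = k by ring]
    exact AddSubgroup.mem_zmultiples k

lemma auxCardSh [NeZero n] (k : ZMod n) :
    Fintype.card {w : ZMod n → Fin q // auxSh k w = w} = q ^ (n / addOrderOf k) := by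
  have e : {w : ZMod n → Fin q // auxSh k w = w} ≃
      ((ZMod n ⧸ AddSubgroup.zmultiples k) → Fin q) :=
    { toFun := fun w => fun x => Quotient.liftOn' x w.1 (fun a b hab =>
        (auxSh_fix_iff k w.1).1 w.2 a b (QuotientAddGroup.leftRel_apply.1 hab))
      invFun := fun v => ⟨fun a => v (a : ZMod n ⧸ AddSubgroup.zmultiples k),
        (auxSh_fix_iff k _).2 fun a b hab => congrArg v (QuotientAddGroup.eq.2 hab)⟩
      left_inv := fun w => rfl
      right_inv := fun v => by
        funext x
        induction x using QuotientAddGroup.induction_on with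
        | H z => rfl }
  have h := AddSubgroup.card_eq_card_quotient_mul_card_addSubgroup (AddSubgroup.zmultiples k)
  rw [Nat.card_zmultiples, Nat.card_zmod] at h
  rw [← Nat.card_eq_fintype_card, Nat.card_congr e, Nat.card_fun, Nat.card_eq_fintype_card,
    Fintype.card_fin]
  congr 1
  have hp : 0 < addOrderOf k := addOrderOf_pos k
  exact (Nat.div_eq_of_eq_mul_left hp h).symm

lemma auxSumSh [NeZero n] :
    ∑ k : ZMod n, q ^ (n / addOrderOf k) = ∑ d ∈ n.divisors, d.totient * q ^ (n / d) := by
  rw [← Finset.sum_fiberwise_of_maps_to (s := Finset.univ) (t := n.divisors)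
    (g := fun k : ZMod n => addOrderOf k)]
  · refine Finset.sum_congr rfl fun d hd => ?_
    rw [← IsAddCyclic.card_addOrderOf_eq_totient (α := ZMod n) (d := d)
      (by rw [ZMod.card]; exact Nat.dvd_of_mem_divisors hd), Finset.card_eq_sum_ones,
      Finset.sum_mul]
    refine Finset.sum_congr rfl fun k hk => ?_
    rw [(Finset.mem_filter.1 hk).2, one_mul]
  · intro k _
    rw [Nat.mem_divisors]
    refine ⟨?_, NeZero.ne n⟩
    have := addOrderOf_dvd_card (x := k)
    rwa [ZMod.card] at this

lemma auxCardRf [NeZero n] (hodd : Odd n) (k : ZMod n) :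
    Fintype.card {w : ZMod n → Fin q // auxRf k w = w} = q ^ ((n + 1) / 2) := by
  obtain ⟨m, hm⟩ : ∃ m : ZMod n, k = m + m := by
    obtain ⟨r, hr⟩ := hodd
    refine ⟨k * (r + 1 : ℕ), ?_⟩
    have : ((2 * r + 1 : ℕ) : ZMod n) = 0 := by rw [← hr]; simp
    push_cast at this ⊢
    linear_combination -k * this
  have hn2 : (n + 1) / 2 = n / 2 + 1 := by obtain ⟨r, hr⟩ := hodd; omega
  have e : {w : ZMod n → Fin q // auxRf k w = w} ≃ (Fin (n / 2 + 1) → Fin q) :=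
    { toFun := fun w j => w.1 (m + (j.1 : ZMod n))
      invFun := fun v => ⟨fun i => v ⟨(i - m).valMinAbs.natAbs,
          Nat.lt_succ_of_le (ZMod.natAbs_valMinAbs_le _)⟩, by
        funext i
        simp only [auxRf]
        congr 2
        rw [← ZMod.natAbs_valMinAbs_neg]
        congr 2
        rw [hm]; ring⟩
      left_inv := by
        rintro ⟨w, hw⟩
        ext1
        funext i
        simp only [ZMod.natCast_natAbs_valMinAbs]
        split_ifs
        · congr 1; ring
        · rw [← congrFun hw i]
          simp only [auxRf]; congr 1; rw [hm]; ring
      right_inv := by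
        intro v
        funext j
        simp only
        congr 1
        ext1
        simp only [add_sub_cancel_left]
        rw [ZMod.valMinAbs_natCast_of_le_half (Nat.le_of_lt_succ j.2)]
        simp }
  rw [Fintype.card_congr e, hn2]
  simp

lemma auxRank [NeZero n] (hodd : Odd n) :
    2 * n * Module.finrank ℚ (auxS n q) + n * q ^ ((n + 1) / 2) =
      ∑ d ∈ n.divisors, d.totient * q ^ (n / d) := by
  have hn : (n : ℚ) ≠ 0 := by exact_mod_cast NeZero.ne n
  have h := (auxE_isProj (n := n) (q := q)).trace
  rw [auxE, map_smul, map_sub, map_sum, map_sum] at h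
  simp only [auxTrace, auxCardSh, auxCardRf hodd] at h
  rw [← auxSumSh]
  simp only [Finset.sum_const, Finset.card_univ, ZMod.card, smul_eq_mul, nsmul_eq_mul] at h
  have : (2 * n * Module.finrank ℚ (auxS n q) + n * q ^ ((n + 1) / 2) : ℚ) =
      ∑ k : ZMod n, (q : ℚ) ^ (n / addOrderOf k) := by
    rw [← h]
    push_cast
    field_simp
    ring
  exact_mod_cast this

end Aux

noncomputable def auxEval (g n : ℕ) : (DCoinv g n →ₗ[ℤ] ℚ) →ₗ[ℚ] (DWord g n → ℚ) where
  toFun f w := f (Submodule.Quotient.mk (Finsupp.single w 1))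
  map_add' _ _ := rfl
  map_smul' _ _ := rfl

lemma auxRot_single (g n : ℕ) (w : DWord g n) (c : ℤ) :
    rotMap g n (Finsupp.single w c) = Finsupp.single (auxSh 1 w) c := by
  simp only [rotMap, Finsupp.lmapDomain_apply, Finsupp.mapDomain_single]
  rfl

lemma auxRev_single (g n : ℕ) (hodd : Odd n) (w : DWord g n) (c : ℤ) :
    revMap g n (Finsupp.single w c) = - Finsupp.single (auxRf (-1) w) c := by
  simp only [revMap, hodd.neg_one_pow, neg_smul, one_smul,
    LinearMap.neg_apply, Finsupp.lmapDomain_apply, Finsupp.mapDomain_single]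
  congr 2
  funext i
  simp only [auxRf]; congr 1; ring

lemma auxEval_inj (g n : ℕ) : Function.Injective (auxEval g n) := by
  intro f f' h
  apply Submodule.linearMap_qext
  apply Finsupp.lhom_ext'
  intro w
  ext
  exact congrFun h w

lemma auxEval_range (g n : ℕ) (hodd : Odd n) :
    LinearMap.range (auxEval g n) = auxS n (2 * g) := by
  apply le_antisymm
  · rintro _ ⟨f, rfl⟩ w
    constructor
    · change f (Submodule.Quotient.mk _) = f (Submodule.Quotient.mk _)
      congr 1
      symm
      rw [Submodule.Quotient.eq]
      refine Submodule.subset_span ⟨1, Finsupp.single w 1, Or.inl ?_⟩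
      rw [pow_one, auxRot_single]
    · change f (Submodule.Quotient.mk _) = - f (Submodule.Quotient.mk _)
      have key : (Submodule.Quotient.mk (Finsupp.single w 1) : DCoinv g n) =
          Submodule.Quotient.mk (- Finsupp.single (auxRf (-1) w) 1) := by
        rw [Submodule.Quotient.eq]
        refine Submodule.subset_span ⟨0, Finsupp.single w 1, Or.inr ?_⟩
        rw [pow_zero, one_mul, auxRev_single g n hodd]
      rw [key, Submodule.Quotient.mk_neg, map_neg, neg_neg]
  · intro f hf
    let F : (DWord g n →₀ ℤ) →ₗ[ℤ] ℚ := Finsupp.lsum ℤ fun w => LinearMap.toSpanSingleton ℤ ℚ (f w)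
    have hF : ∀ w c, F (Finsupp.single w c) = c • f w := by
      intro w c; simp [F]
    have h1 : F ∘ₗ rotMap g n = F := by
      ext w
      simp only [LinearMap.comp_apply, Finsupp.lsingle_apply, auxRot_single, hF, (hf w).1]
    have h2 : F ∘ₗ revMap g n = F := by
      ext w
      simp only [LinearMap.comp_apply, Finsupp.lsingle_apply, auxRev_single g n hodd, map_neg,
        hF, (hf w).2]
      simp
    have h1' : ∀ k v, F ((rotMap g n ^ k) v) = F v := by
      intro k
      induction k with
      | zero => intro v; simp
      | succ k ih =>
        intro v
        rw [pow_succ, Module.End.mul_apply, ih]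
        exact LinearMap.congr_fun h1 v
    have hle : dihedralAug g n ≤ LinearMap.ker F := by
      apply Submodule.span_le.2
      rintro u ⟨k, v, rfl | rfl⟩
      · simp [h1']
      · have : F (revMap g n v) = F v := LinearMap.congr_fun h2 v
        simp [h1', this]
    refine ⟨(dihedralAug g n).liftQ F hle, ?_⟩
    funext w
    change (dihedralAug g n).liftQ F hle (Submodule.Quotient.mk _) = _
    rw [Submodule.liftQ_apply, hF, one_smul]

lemma auxFinrank (g n : ℕ) (hodd : Odd n) :
    Module.finrank ℚ (ℚ ⊗[ℤ] DCoinv g n) = Module.finrank ℚ (auxS n (2 * g)) := by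
  rw [← Subspace.dual_finrank_eq, ← auxEval_range g n hodd,
    LinearMap.finrank_range_of_inj (auxEval_inj g n)]
  exact (LinearMap.liftBaseChangeEquiv (R := ℤ) (M := DCoinv g n) (N := ℚ) ℚ).symm.finrank_eq

/-- For `n ≥ 3` odd and `g ≥ 1`, the free rank of `(H^{⊗n})_{D_{2n}}`, i.e. the dimension
over `ℚ` of `(H^{⊗n})_{D_{2n}} ⊗ ℚ`, equals `(1/2)·N_{2g}(n) − (1/2)·(2g)^{(n+1)/2}`,
where `N_q(n) = (1/n)·Σ_{d∣n} φ(d)·q^{n/d}`.  (The identity is stated multiplied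
through by `2n` and with the subtraction moved to the left-hand side.) -/
theorem stmt_1 (g n : ℕ) (hg : 1 ≤ g) (hn : 3 ≤ n) (hodd : Odd n) :
    2 * n * Module.finrank ℚ (ℚ ⊗[ℤ] DCoinv g n) + n * (2 * g) ^ ((n + 1) / 2) =
      ∑ d ∈ n.divisors, d.totient * (2 * g) ^ (n / d) := by
  haveI : NeZero n := ⟨by omega⟩
  rw [auxFinrank g n hodd]
  exact auxRank hodd
end

section
/- Let n ≥ 3 be odd and g ≥ 1. Then the torsion subgroup of (H^{⊗n})_{D_{2n}} is isomorphic to (ℤ/2ℤ)^{(2g)^{(n+1)/2}}; equivalently, it is isomorphic to H^{⊗(n+1)/2} ⊗ ℤ/2ℤ. -/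
theorem aux_torsion {M Q : Type} [AddCommGroup M] [Finite Q] (σ : Q → Q)
    (hσ : ∀ q, σ (σ q) = q) (π : Q → M) (hπ : ∀ q, π (σ q) = - π q)
    (hlift : ∀ (N : Type) [AddCommGroup N] (f : Q → N), (∀ q, f (σ q) = - f q) →
      ∃ F : M →ₗ[ℤ] N, ∀ q, F (π q) = f q)
    (hspan : Submodule.span ℤ (Set.range π) = ⊤) :
    Nonempty (Submodule.torsion ℤ M ≃ₗ[ℤ] ({q : Q // σ q = q} →₀ ZMod 2)) := by
  classical
  obtain ⟨e, he⟩ := exists_injective_nat Q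
  obtain ⟨F1, hF1⟩ := hlift (Q →₀ ℤ) (fun q => if e q < e (σ q) then Finsupp.single q 1 else
    if e (σ q) < e q then - Finsupp.single (σ q) 1 else 0) (by
      intro q
      simp only [hσ]
      rcases lt_trichotomy (e q) (e (σ q)) with h | h | h
      · simp [h, h.not_gt]
      · simp [h]
      · simp [h, h.not_gt])
  obtain ⟨F2, hF2⟩ := hlift ({q : Q // σ q = q} →₀ ZMod 2)
    (fun q => if h : σ q = q then Finsupp.single ⟨q, h⟩ 1 else 0) (by
      intro q
      by_cases h : σ q = q
      · have h2 : σ (σ q) = σ q := by rw [h, h]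
        simp only [h2, h, dif_pos]
        rw [← Finsupp.single_neg]
        congr 1
      · have h2 : ¬ σ (σ q) = σ q := by rw [hσ]; exact fun h' => h h'.symm
        simp [h2, h])
  have h2 : ∀ p : {q : Q // σ q = q}, (2 : ℤ) • π p.1 = 0 := by
    intro p
    have := hπ p.1
    rw [p.2] at this
    rw [two_smul]
    exact eq_neg_iff_add_eq_zero.mp this
  let G1 : (Q →₀ ℤ) →ₗ[ℤ] M := Finsupp.linearCombination ℤ π
  let G2 : ({q : Q // σ q = q} →₀ ZMod 2) →ₗ[ℤ] M :=
    (Finsupp.liftAddHom (fun p : {q : Q // σ q = q} =>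
      ZMod.lift 2 ⟨zmultiplesHom M (π p.1), by
        simpa using h2 p⟩)).toIntLinearMap
  have hG2 : ∀ p, G2 (Finsupp.single p 1) = π p.1 := by
    intro p
    have : (1 : ZMod 2) = ((1 : ℤ) : ZMod 2) := by simp
    simp only [G2, AddMonoidHom.coe_toIntLinearMap, Finsupp.liftAddHom_apply_single]
    rw [this, ZMod.lift_coe]
    simp
  have hid : ∀ m, G1 (F1 m) + G2 (F2 m) = m := by
    have : G1 ∘ₗ F1 + G2 ∘ₗ F2 = LinearMap.id := by
      apply LinearMap.ext_on_range hspan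
      intro q
      simp only [LinearMap.add_apply, LinearMap.comp_apply, hF1, hF2, LinearMap.id_apply]
      by_cases h : σ q = q
      · simp [h, hG2]
      · have hne : e q ≠ e (σ q) := fun h' => h (he h').symm
        rcases lt_or_gt_of_ne hne with h' | h'
        · simp [h, h', G1]
        · simp [h, h', h'.not_gt, G1, hπ]
    intro m
    exact LinearMap.congr_fun this m
  have hid2 : ∀ x, F2 (G2 x) = x := by
    intro x
    induction x using Finsupp.induction_linear with
    | zero => simp
    | add f g hf hg => rw [map_add, map_add, hf, hg]
    | single p a =>
      obtain ⟨k, rfl⟩ := ZMod.intCast_surjective a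
      have : (Finsupp.single p (k : ZMod 2)) = k • Finsupp.single p (1 : ZMod 2) := by
        rw [Finsupp.smul_single]; simp
      rw [this, map_smul, map_smul, hG2, hF2, dif_pos p.2]
  have htor : ∀ x, G2 x ∈ Submodule.torsion ℤ M := by
    intro x
    rw [Submodule.mem_torsion_iff]
    refine ⟨⟨2, by simp⟩, ?_⟩
    change (2 : ℤ) • G2 x = 0
    rw [← map_smul]
    have : (2 : ℤ) • x = 0 := by
      ext p
      simp only [Finsupp.smul_apply, Finsupp.zero_apply]
      generalize x p = a
      revert a; decide
    rw [this, map_zero]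
  have hz : ∀ t ∈ Submodule.torsion ℤ M, F1 t = 0 := by
    intro t ht
    rw [Submodule.mem_torsion_iff] at ht
    obtain ⟨a, ha⟩ := ht
    have ha' : (a : ℤ) • t = 0 := ha
    have h := congrArg F1 ha'
    rw [map_smul, map_zero] at h
    exact (smul_eq_zero.mp h).resolve_left (nonZeroDivisors.ne_zero a.2)
  exact ⟨LinearEquiv.ofLinearMap (F2 ∘ₗ (Submodule.torsion ℤ M).subtype)
    (LinearMap.codRestrict _ G2 htor)
    (LinearMap.ext fun x => hid2 x)
    (by
      apply LinearMap.ext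
      intro t
      apply Subtype.ext
      have := hid t.1
      rw [hz t.1 t.2, map_zero, zero_add] at this
      simpa using this)⟩

theorem aux_card (m : ℕ) (α : Type) [Finite α] :
    Nat.card {w : ZMod (2 * m + 1) → α // (fun i => w (-i - 1)) = w} = Nat.card α ^ (m + 1) := by
  have hv : ∀ i : ZMod (2 * m + 1), (-i - 1).val = 2 * m - i.val := by
    intro i
    have hi := ZMod.val_lt i
    have : (-i - 1) = ((2 * m - i.val : ℕ) : ZMod (2 * m + 1)) := by
      rw [Nat.cast_sub (by omega)]
      have h0 : ((2 * m + 1 : ℕ) : ZMod (2 * m + 1)) = 0 := ZMod.natCast_self _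
      push_cast at h0 ⊢
      rw [ZMod.natCast_zmod_val]
      linear_combination -h0
    rw [this, ZMod.val_natCast, Nat.mod_eq_of_lt (by omega)]
  have E : {w : ZMod (2 * m + 1) → α // (fun i => w (-i - 1)) = w} ≃ (Fin (m + 1) → α) :=
    { toFun := fun w j => w.1 (j.1 : ℕ)
      invFun := fun u => ⟨fun i => u ⟨min i.val (2 * m - i.val), by omega⟩, by
        funext i
        have hi := ZMod.val_lt i
        apply congrArg u
        apply Fin.ext
        dsimp only
        rw [hv]
        omega⟩
      left_inv := by
        rintro ⟨w, hw⟩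
        apply Subtype.ext
        funext i
        have hi := ZMod.val_lt i
        rcases le_total i.val (2 * m - i.val) with h | h
        · simp [min_eq_left h]
        · simp only [min_eq_right h]
          rw [← hv, ZMod.natCast_zmod_val]
          exact congrFun hw i
      right_inv := by
        intro u
        funext j
        have hj := j.2
        have : ((j.1 : ℕ) : ZMod (2 * m + 1)).val = j.1 := by
          rw [ZMod.val_natCast, Nat.mod_eq_of_lt (by omega)]
        dsimp only
        congr 1
        apply Fin.ext
        simp only [this]
        omega }
  rw [Nat.card_congr E, Nat.card_fun]
  simp

/-- rotation equivalence -/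
def rotSetoid (g n : ℕ) : Setoid (DWord g n) where
  r w w' := ∃ k : ZMod n, ∀ i, w' i = w (i - k)
  iseqv := by
    refine ⟨fun w => ⟨0, by simp⟩, ?_, ?_⟩
    · rintro w w' ⟨k, hk⟩
      exact ⟨-k, fun i => by rw [hk]; congr 1; ring⟩
    · rintro w w' w'' ⟨k, hk⟩ ⟨l, hl⟩
      exact ⟨k + l, fun i => by rw [hl, hk]; congr 1; ring⟩

/-- reversal on rotation classes -/
def revQ (g n : ℕ) : Quotient (rotSetoid g n) → Quotient (rotSetoid g n) :=
  Quotient.map (fun w i => w (-i - 1)) (by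
    rintro w w' ⟨k, hk⟩
    exact ⟨-k, fun i => by dsimp only; rw [hk]; congr 1; ring⟩)

theorem rotMap_single (g n : ℕ) (w : DWord g n) (c : ℤ) :
    rotMap g n (Finsupp.single w c) = Finsupp.single (fun i => w (i - 1)) c := by
  simp [rotMap, Finsupp.mapDomain_single]

theorem revMap_single (g n : ℕ) (h : Odd n) (w : DWord g n) (c : ℤ) :
    revMap g n (Finsupp.single w c) = - Finsupp.single (fun i => w (-i - 1)) c := by
  simp [revMap, Finsupp.mapDomain_single, h.neg_one_pow]

theorem rotMap_pow_single (g n : ℕ) (w : DWord g n) (c : ℤ) (k : ℕ) :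
    (rotMap g n ^ k) (Finsupp.single w c) = Finsupp.single (fun i => w (i - k)) c := by
  induction k with
  | zero => simp
  | succ k ih =>
    rw [pow_succ', Module.End.mul_apply, ih, rotMap_single]
    congr 1
    funext i
    congr 1
    push_cast
    ring

theorem aux_mk_rot (g n : ℕ) [NeZero n] (w w' : DWord g n) (h : (rotSetoid g n).r w w') :
    (dihedralAug g n).mkQ (Finsupp.single w 1) = (dihedralAug g n).mkQ (Finsupp.single w' 1) := by
  obtain ⟨k, hk⟩ := h
  simp only [Submodule.mkQ_apply]
  rw [Submodule.Quotient.eq]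
  apply Submodule.subset_span
  refine ⟨k.val, Finsupp.single w 1, Or.inl ?_⟩
  rw [rotMap_pow_single, ZMod.natCast_zmod_val]
  congr 2
  funext i
  exact hk i

theorem aux_mk_rev (g n : ℕ) (hn : Odd n) (w : DWord g n) :
    (dihedralAug g n).mkQ (Finsupp.single (fun i => w (-i - 1)) 1) =
      - (dihedralAug g n).mkQ (Finsupp.single w 1) := by
  rw [← map_neg]
  simp only [Submodule.mkQ_apply]
  rw [Submodule.Quotient.eq]
  apply Submodule.subset_span
  refine ⟨0, Finsupp.single w 1, Or.inr ?_⟩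
  rw [pow_zero, one_mul, revMap_single g n hn]
  abel

theorem aux_lift (g n : ℕ) (hn : Odd n) (N : Type) [AddCommGroup N]
    (f : Quotient (rotSetoid g n) → N) (hf : ∀ q, f (revQ g n q) = - f q) :
    ∃ F : DCoinv g n →ₗ[ℤ] N, ∀ w, F ((dihedralAug g n).mkQ (Finsupp.single w 1)) =
      f (Quotient.mk _ w) := by
  let L : (DWord g n →₀ ℤ) →ₗ[ℤ] N :=
    Finsupp.linearCombination ℤ (fun w => f (Quotient.mk _ w))
  have h1 : ∀ k v, L ((rotMap g n ^ k) v) = L v := by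
    intro k v
    induction v using Finsupp.induction_linear with
    | zero => simp
    | add a b ha hb => rw [map_add, map_add, ha, hb, map_add]
    | single w c =>
      rw [rotMap_pow_single]
      simp only [L, Finsupp.linearCombination_single]
      congr 2
      apply Quotient.sound
      exact (rotSetoid g n).symm ⟨k, fun i => rfl⟩
  have h2 : ∀ v, L (revMap g n v) = L v := by
    intro v
    induction v using Finsupp.induction_linear with
    | zero => simp
    | add a b ha hb => rw [map_add, map_add, ha, hb, map_add]
    | single w c =>
      rw [revMap_single g n hn, map_neg]
      simp only [L, Finsupp.linearCombination_single]
      rw [← smul_neg, ← hf]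
      congr 2
      apply Quotient.sound
      change (rotSetoid g n).r _ _
      exact ⟨0, fun i => by simp⟩
  refine ⟨(dihedralAug g n).liftQ L ?_, ?_⟩
  · unfold dihedralAug
    rw [Submodule.span_le]
    rintro u ⟨k, v, rfl | rfl⟩
    · simp [h1]
    · simp [h1, h2]
  · intro w
    simp [L]

theorem aux_fix (g m : ℕ) :
    Nat.card {q : Quotient (rotSetoid g (2 * m + 1)) // revQ g (2 * m + 1) q = q} =
      (2 * g) ^ (m + 1) := by
  have hc := aux_card m (Fin (2 * g))
  rw [Nat.card_fin] at hc
  rw [← hc]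
  symm
  have h2 : (2 : ZMod (2 * m + 1)) * (m + 1) = 1 := by
    have h0 : ((2 * m + 1 : ℕ) : ZMod (2 * m + 1)) = 0 := ZMod.natCast_self _
    push_cast at h0
    linear_combination h0
  refine Nat.card_eq_of_bijective (fun w => ⟨Quotient.mk _ w.1, congrArg (Quotient.mk _) w.2⟩)
    ⟨?_, ?_⟩
  · rintro ⟨w, hw⟩ ⟨w', hw'⟩ h
    have h' := Quotient.exact (congrArg Subtype.val h)
    obtain ⟨k, hk⟩ : ∃ k : ZMod (2 * m + 1), ∀ i, w' i = w (i - k) := h'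
    have hs : ∀ i, w (-i - 1) = w i := fun i => congrFun hw i
    have hs' : ∀ i, w' (-i - 1) = w' i := fun i => congrFun hw' i
    -- w is invariant under translation by 2k
    have hp : ∀ i, w (i + 2 * k) = w i := by
      intro i
      have e1 := hs' (i + k)
      rw [hk, hk, ← hs] at e1
      rw [← add_sub_cancel_right i k, ← e1]
      simp only [add_sub_cancel_right]
      congr 1
      ring
    have hq : ∀ (j : ℕ) i, w (i + j * (2 * k)) = w i := by
      intro j
      induction j with
      | zero => simp
      | succ j ih =>
        intro i
        rw [← ih i, ← hp (i + j * (2 * k))]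
        congr 1
        push_cast
        ring
    apply Subtype.ext
    funext i
    change w i = w' i
    rw [hk, ← hq (m + 1) (i - k)]
    congr 1
    push_cast
    linear_combination -k * h2
  · rintro ⟨q, hq⟩
    induction q using Quotient.inductionOn with
    | h w =>
      obtain ⟨k, hk⟩ : ∃ k : ZMod (2 * m + 1), ∀ i, w i = w (-(i - k) - 1) := Quotient.exact hq
      refine ⟨⟨fun i => w (i + (m + 1) * k), ?_⟩, ?_⟩
      · funext i
        dsimp only
        rw [hk]
        congr 1
        linear_combination (-k) * h2
      · apply Subtype.ext
        apply Quotient.sound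
        change (rotSetoid g _).r _ _
        exact ⟨(m + 1) * k, fun i => by simp⟩

/-- For `n ≥ 3` odd and `g ≥ 1`, the torsion subgroup of `(H^{⊗n})_{D_{2n}}` is
isomorphic to `(ℤ/2ℤ)^{(2g)^{(n+1)/2}}`, equivalently to `H^{⊗(n+1)/2} ⊗ ℤ/2ℤ`. -/
theorem stmt_2 (g n : ℕ) (hg : 1 ≤ g) (hn : 3 ≤ n) (hodd : Odd n) :
    Nonempty ((Submodule.torsion ℤ (DCoinv g n)) ≃ₗ[ℤ]
      (Fin ((2 * g) ^ ((n + 1) / 2)) → ZMod 2)) := by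
  obtain ⟨m, rfl⟩ := hodd
  have hodd : Odd (2 * m + 1) := ⟨m, rfl⟩
  have hm : (2 * m + 1 + 1) / 2 = m + 1 := by omega
  rw [hm]
  have : Finite (Quotient (rotSetoid g (2 * m + 1))) := Quotient.finite _
  obtain ⟨E⟩ := aux_torsion (M := DCoinv g (2 * m + 1)) (revQ g (2 * m + 1))
    (by
      intro q
      induction q using Quotient.inductionOn with
      | h w =>
        apply Quotient.sound
        change (rotSetoid g _).r _ _
        exact ⟨0, fun i => by simp⟩)
    (fun q => Quotient.liftOn q
      (fun w => (dihedralAug g (2 * m + 1)).mkQ (Finsupp.single w 1)) (aux_mk_rot g _))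
    (by
      intro q
      induction q using Quotient.inductionOn with
      | h w => exact aux_mk_rev g _ hodd w)
    (by
      intro N _ f hf
      obtain ⟨F, hF⟩ := aux_lift g _ hodd N f hf
      refine ⟨F, fun q => ?_⟩
      induction q using Quotient.inductionOn with
      | h w => exact hF w)
    (by
      rw [eq_top_iff]
      intro x _
      obtain ⟨v, rfl⟩ := Submodule.mkQ_surjective _ x
      induction v using Finsupp.induction_linear with
      | zero => simp
      | add a b ha hb => rw [map_add]; exact Submodule.add_mem _ (ha trivial) (hb trivial)
      | single w c =>
        have : Finsupp.single w c = c • Finsupp.single w (1 : ℤ) := by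
          rw [Finsupp.smul_single]; simp
        rw [this, map_smul]
        exact Submodule.smul_mem _ _ (Submodule.subset_span ⟨Quotient.mk _ w, rfl⟩))
  let e : {q : Quotient (rotSetoid g (2 * m + 1)) // revQ g (2 * m + 1) q = q} ≃
      Fin ((2 * g) ^ (m + 1)) := Finite.equivFinOfCardEq (aux_fix g m)
  exact ⟨E.trans ((Finsupp.domLCongr e).trans (Finsupp.linearEquivFunOnFinite ℤ (ZMod 2) _))⟩
end

section
/- Let n = 2m−1 ≥ 3 be odd and g ≥ 1. The ℤ-linear map H^{⊗m} → (H^{⊗n})_{D_{2n}} defined on basis tensors by a_1⊗a_2⊗⋯⊗a_m ↦ [a_1⊗a_2⊗⋯⊗a_{m−1}⊗a_m⊗a_m⊗a_{m−1}⊗⋯⊗a_2] (a_i ∈ B; the right-hand side has n = 2m−1 tensor factors) induces a well-defined ℤ/2ℤ-linear map H^{⊗m} ⊗ ℤ/2ℤ → (H^{⊗n})_{D_{2n}}, and this induced map is injective with image exactly the torsion subgroup of (H^{⊗n})_{D_{2n}}. -/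
/-- The word of length `n = 2m-1` associated to a word `(a_1,…,a_m)` of length `m`,
namely `a_1 a_2 ⋯ a_{m-1} a_m a_m a_{m-1} ⋯ a_2` (here `w i = a_{i+1}`, 0-indexed). -/
def symWord (g m : ℕ) [NeZero (2 * m - 1)] (w : Fin m → Fin (2 * g)) :
    DWord g (2 * m - 1) :=
  fun j =>
    if h : (ZMod.val j) < m then w ⟨ZMod.val j, h⟩
    else w ⟨2 * m - 1 - ZMod.val j, by
      have h1 := ZMod.val_lt j
      have h2 := NeZero.ne (2 * m - 1)
      omega⟩

/-- The `ℤ`-linear map `H^{⊗m} → (H^{⊗(2m-1)})_{D_{2(2m-1)}}` sending the basis tensor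
`a_1⊗⋯⊗a_m` to the class of `a_1⊗⋯⊗a_{m-1}⊗a_m⊗a_m⊗a_{m-1}⊗⋯⊗a_2`. -/
noncomputable def symEmbed (g m : ℕ) [NeZero (2 * m - 1)] :
    ((Fin m → Fin (2 * g)) →₀ ℤ) →ₗ[ℤ] DCoinv g (2 * m - 1) :=
  (dihedralAug g (2 * m - 1)).mkQ ∘ₗ Finsupp.lmapDomain ℤ ℤ (symWord g m)


namespace DihAux

variable {g n : ℕ}

def rot (k : ZMod n) (w : DWord g n) : DWord g n := fun i => w (i - k)

def rv (w : DWord g n) : DWord g n := fun i => w (-i)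

lemma rotMap_single (w : DWord g n) (a : ℤ) :
    rotMap g n (Finsupp.single w a) = Finsupp.single (rot 1 w) a := by
  rw [rotMap, Finsupp.lmapDomain_apply, Finsupp.mapDomain_single]
  rfl

lemma rotMap_pow_single (k : ℕ) (w : DWord g n) (a : ℤ) :
    (rotMap g n ^ k) (Finsupp.single w a) = Finsupp.single (rot (k : ZMod n) w) a := by
  induction k generalizing w with
  | zero =>
    have : rot ((0 : ℕ) : ZMod n) w = w := by funext i; simp [rot]
    rw [this]; simp
  | succ k ih =>
    rw [pow_succ, Module.End.mul_apply, rotMap_single, ih]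
    congr 1
    funext i
    simp only [rot]
    congr 1
    push_cast
    ring

lemma revMap_single (hn : Odd n) (w : DWord g n) (a : ℤ) :
    revMap g n (Finsupp.single w a) = - Finsupp.single (rot (-1) (rv w)) a := by
  rw [revMap, hn.neg_one_pow, LinearMap.smul_apply, Finsupp.lmapDomain_apply,
    Finsupp.mapDomain_single, neg_smul, one_smul]
  congr 2
  funext i
  simp only [rot, rv]
  congr 1
  ring

lemma aug_le_ker {M : Type*} [AddCommGroup M] [Module ℤ M]
    (hn : Odd n) (φ : ((DWord g n) →₀ ℤ) →ₗ[ℤ] M)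
    (h1 : ∀ k w, φ (Finsupp.single (rot k w) 1) = φ (Finsupp.single w 1))
    (h2 : ∀ w, φ (Finsupp.single (rv w) 1) = - φ (Finsupp.single w 1)) :
    dihedralAug g n ≤ LinearMap.ker φ := by
  have e1 : ∀ k, φ ∘ₗ (rotMap g n ^ k) = φ := by
    intro k
    ext w
    simp only [LinearMap.comp_apply, Finsupp.lsingle_apply, rotMap_pow_single, h1]
  have e2 : φ ∘ₗ (revMap g n) = φ := by
    ext w
    simp only [LinearMap.comp_apply, Finsupp.lsingle_apply, revMap_single hn, map_neg, h1, h2,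
      neg_neg]
  rw [dihedralAug, Submodule.span_le]
  rintro u ⟨k, v, rfl | rfl⟩
  · have := LinearMap.congr_fun (e1 k) v
    simp only [LinearMap.comp_apply] at this
    simp [this]
  · have h := LinearMap.congr_fun (e1 k) (revMap g n v)
    have h' := LinearMap.congr_fun e2 v
    simp only [LinearMap.comp_apply] at h h'
    simp [h, h']

lemma mk_rot [NeZero n] (k : ZMod n) (w : DWord g n) (a : ℤ) :
    (dihedralAug g n).mkQ (Finsupp.single (rot k w) a) =
      (dihedralAug g n).mkQ (Finsupp.single w a) := by
  symm
  rw [← sub_eq_zero, ← map_sub, Submodule.mkQ_apply, Submodule.Quotient.mk_eq_zero]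
  refine Submodule.subset_span ⟨k.val, Finsupp.single w a, Or.inl ?_⟩
  rw [rotMap_pow_single, ZMod.natCast_zmod_val]

lemma mk_rv [NeZero n] (hn : Odd n) (w : DWord g n) (a : ℤ) :
    (dihedralAug g n).mkQ (Finsupp.single (rv w) a) =
      - (dihedralAug g n).mkQ (Finsupp.single w a) := by
  symm
  rw [neg_eq_iff_add_eq_zero, ← mk_rot (-1) (rv w), ← map_add, Submodule.mkQ_apply,
    Submodule.Quotient.mk_eq_zero]
  refine Submodule.subset_span ⟨0, Finsupp.single w a, Or.inr ?_⟩
  simp [revMap_single hn]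

lemma rot_rot (k l : ZMod n) (w : DWord g n) : rot k (rot l w) = rot (k + l) w := by
  funext i; simp only [rot]; congr 1; ring

lemma rot_zero (w : DWord g n) : rot 0 w = w := by
  funext i; simp [rot]

lemma rv_rot (k : ZMod n) (w : DWord g n) : rv (rot k w) = rot (-k) (rv w) := by
  funext i; simp only [rot, rv]; congr 1; ring

lemma rv_rv (w : DWord g n) : rv (rv w) = w := by
  funext i; simp [rv]

def rs (g n : ℕ) : Setoid (DWord g n) where
  r w w' := ∃ k, w' = rot k w
  iseqv := ⟨fun w => ⟨0, (rot_zero w).symm⟩,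
    fun {w w'} ⟨k, h⟩ => ⟨-k, by rw [h, rot_rot, neg_add_cancel, rot_zero]⟩,
    fun {a b c} ⟨k, h⟩ ⟨l, h'⟩ => ⟨l + k, by rw [h', h, rot_rot]⟩⟩

noncomputable def rep (w : DWord g n) : DWord g n :=
  (Quotient.mk (rs g n) w).out

lemma rep_spec (w : DWord g n) : ∃ k, w = rot k (rep w) :=
  Quotient.exact (s := rs g n) (Quotient.out_eq (Quotient.mk (rs g n) w))

lemma rep_rot (k : ZMod n) (w : DWord g n) : rep (rot k w) = rep w := by
  have : Quotient.mk (rs g n) w = Quotient.mk (rs g n) (rot k w) := Quotient.sound ⟨k, rfl⟩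
  rw [rep, ← this, rep]

lemma rep_rv_rot (k : ZMod n) (w : DWord g n) : rep (rv (rot k w)) = rep (rv w) := by
  rw [rv_rot, rep_rot]

lemma exists_code (g n : ℕ) [NeZero n] : ∃ f : DWord g n → ℤ, Function.Injective f :=
  ⟨fun w => ((Fintype.equivFin (DWord g n) w : ℕ) : ℤ), fun a b h => by
    simpa [Fin.val_inj] using h⟩

noncomputable def psi0 (f : DWord g n → ℤ) (w : DWord g n) : (DWord g n) →₀ ℤ :=
  if f (rep w) < f (rep (rv w)) then Finsupp.single (rep w) 1
  else if f (rep (rv w)) < f (rep w) then - Finsupp.single (rep (rv w)) 1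
  else 0

lemma psi0_rot (f : DWord g n → ℤ) (k : ZMod n) (w : DWord g n) :
    psi0 f (rot k w) = psi0 f w := by
  simp only [psi0, rep_rot, rep_rv_rot]

lemma psi0_rv (f : DWord g n → ℤ) (w : DWord g n) :
    psi0 f (rv w) = - psi0 f w := by
  simp only [psi0, rv_rv]
  split_ifs
  · omega
  all_goals simp

section sym

variable {m : ℕ} [NeZero (2 * m - 1)]

lemma symWord_val (u : Fin m → Fin (2 * g)) (j : ZMod (2 * m - 1)) (h : j.val < m) :
    symWord g m u j = u ⟨j.val, h⟩ := by
  simp [symWord, h]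

lemma rv_symWord (u : Fin m → Fin (2 * g)) : rv (symWord g m u) = symWord g m u := by
  funext j
  have hj := ZMod.val_lt j
  simp only [rv, symWord, ZMod.neg_val]
  by_cases h0 : j = 0
  · simp [h0]
  · have : j.val ≠ 0 := by simpa [ZMod.val_eq_zero] using h0
    simp only [h0, if_false]
    by_cases h1 : j.val < m
    · have h2 : ¬ (2 * m - 1 - j.val < m) := by omega
      rw [dif_neg h2, dif_pos h1]
      congr 2; omega
    · have h2 : 2 * m - 1 - j.val < m := by omega
      rw [dif_pos h2, dif_neg h1]

lemma exists_symWord (hm : 2 ≤ m) (w : DWord g (2 * m - 1)) (h : rv w = w) :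
    ∃ u, w = symWord g m u := by
  refine ⟨fun i => w ((i : ℕ) : ZMod (2 * m - 1)), ?_⟩
  funext j
  have hj := ZMod.val_lt j
  simp only [symWord]
  split_ifs with hh
  · simp
  · rw [Nat.cast_sub hj.le]
    simp only [ZMod.natCast_self, ZMod.natCast_zmod_val, zero_sub]
    exact (congrFun h j).symm

lemma symWord_inj (hm : 2 ≤ m) : Function.Injective (symWord g m) := by
  intro u u' h
  funext i
  have hi := i.2
  have hv : ((i : ℕ) : ZMod (2 * m - 1)).val = i := ZMod.val_cast_of_lt (by omega)
  have := congrFun h ((i : ℕ) : ZMod (2 * m - 1))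
  rw [symWord_val _ _ (by omega), symWord_val _ _ (by omega)] at this
  simpa [hv] using this

lemma exists_half (hm : 2 ≤ m) (k : ZMod (2 * m - 1)) : (m : ZMod (2 * m - 1)) * k
    + (m : ZMod (2 * m - 1)) * k = k := by
  have : ((2 * m - 1 + 1 : ℕ) : ZMod (2 * m - 1)) = 1 := by simp
  rw [Nat.sub_add_cancel (by omega)] at this
  push_cast at this
  rw [← add_mul, ← two_mul, this, one_mul]

lemma achiral (hm : 2 ≤ m) (w : DWord g (2 * m - 1)) (h : rep (rv w) = rep w) :
    ∃ k u, w = rot k (symWord g m u) := by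
  obtain ⟨a, ha⟩ := rep_spec w
  obtain ⟨b, hb⟩ := rep_spec (rv w)
  rw [h] at hb
  have hk : rv w = rot (b - a) w := by
    conv_rhs => rw [ha]
    rw [rot_rot, hb]
    simp
  set k := b - a
  have hh := exists_half hm k
  set t := (m : ZMod (2 * m - 1)) * k
  obtain ⟨u, hu⟩ := exists_symWord hm (rot t w) (by
    rw [rv_rot, hk, rot_rot]; congr 1; rw [← hh]; ring)
  exact ⟨-t, u, by rw [← hu, rot_rot, neg_add_cancel, rot_zero]⟩

lemma sym_unique (hm : 2 ≤ m) (w : DWord g (2 * m - 1)) (hw : rv w = w) (k : ZMod (2 * m - 1))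
    (h : rv (rot k w) = rot k w) : rot k w = w := by
  have h2 : rot (k + k) w = w := by
    rw [rv_rot, hw] at h
    rw [← rot_rot, ← h, rot_rot, add_neg_cancel, rot_zero]
  have h3 : ∀ j : ℕ, rot ((j : ZMod (2 * m - 1)) * (k + k)) w = w := by
    intro j
    induction j with
    | zero => simp [rot_zero]
    | succ j ih =>
      have : ((j + 1 : ℕ) : ZMod (2 * m - 1)) * (k + k)
        = (j : ZMod (2 * m - 1)) * (k + k) + (k + k) := by push_cast; ring
      rw [this, ← rot_rot, h2, ih]
  have := h3 m
  rwa [mul_add, exists_half hm] at this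

open Classical in
lemma coef (hm : 2 ≤ m) (hn : Odd (2 * m - 1)) (v : (Fin m → Fin (2 * g)) →₀ ℤ)
    (hv : symEmbed g m v = 0) (u : Fin m → Fin (2 * g)) : ((v u : ℤ) : ZMod 2) = 0 := by
  let φ : ((DWord g (2 * m - 1)) →₀ ℤ) →ₗ[ℤ] ZMod 2 :=
    Finsupp.linearCombination ℤ (fun w => if ∃ k, w = rot k (symWord g m u) then 1 else 0)
  have hr : ∀ k w, (∃ l, rot k w = rot l (symWord g m u)) ↔ ∃ l, w = rot l (symWord g m u) := by
    intro k w
    constructor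
    · rintro ⟨l, h⟩
      refine ⟨-k + l, ?_⟩
      rw [← rot_rot, ← h, rot_rot, neg_add_cancel, rot_zero]
    · rintro ⟨l, h⟩
      exact ⟨k + l, by rw [h, rot_rot]⟩
  have hv' : ∀ w, (∃ l, rv w = rot l (symWord g m u)) ↔ ∃ l, w = rot l (symWord g m u) := by
    intro w
    constructor
    · rintro ⟨l, h⟩
      exact ⟨-l, by rw [← rv_rv w, h, rv_rot, rv_symWord]⟩
    · rintro ⟨l, h⟩
      exact ⟨-l, by rw [h, rv_rot, rv_symWord]⟩
  have hker := aug_le_ker hn φ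
    (by intro k w; simp only [φ, Finsupp.linearCombination_single, hr])
    (by intro w
        simp only [φ, Finsupp.linearCombination_single, hv', one_smul]
        exact (ZModModule.neg_eq_self _).symm)
  have hmem : Finsupp.lmapDomain ℤ ℤ (symWord g m) v ∈ dihedralAug g (2 * m - 1) := by
    rw [← Submodule.Quotient.mk_eq_zero]
    exact hv
  have h0 : φ (Finsupp.lmapDomain ℤ ℤ (symWord g m) v) = 0 := hker hmem
  have hφ : ∀ u', (∃ k, symWord g m u' = rot k (symWord g m u)) ↔ u' = u := by
    intro u'
    constructor
    · rintro ⟨k, h⟩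
      apply symWord_inj hm
      rw [h]
      apply sym_unique hm _ (rv_symWord u)
      rw [← h, rv_symWord]
    · rintro rfl
      exact ⟨0, (rot_zero _).symm⟩
  rw [Finsupp.lmapDomain_apply, Finsupp.linearCombination_mapDomain,
    Finsupp.linearCombination_apply, Finsupp.sum_fintype _ _ (by simp)] at h0
  simpa [hφ] using h0

lemma two_kill (hn : Odd (2 * m - 1)) (v : (Fin m → Fin (2 * g)) →₀ ℤ) :
    symEmbed g m ((2 : ℤ) • v) = 0 := by
  have : (2 : ℤ) • symEmbed g m = 0 := by
    ext u
    simp only [LinearMap.comp_apply, Finsupp.lsingle_apply, LinearMap.smul_apply, symEmbed,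
      Finsupp.lmapDomain_apply, Finsupp.mapDomain_single, LinearMap.zero_apply]
    have h := mk_rv hn (symWord g m u) 1
    rw [rv_symWord] at h
    rw [two_smul]
    nth_rewrite 1 [h]
    exact neg_add_cancel _
  rw [map_smul]
  exact LinearMap.congr_fun this v

lemma psi_congr (hm : 2 ≤ m) (hn : Odd (2 * m - 1)) (f : DWord g (2 * m - 1) → ℤ)
    (hf : Function.Injective f) (v : (DWord g (2 * m - 1)) →₀ ℤ) :
    (dihedralAug g (2 * m - 1)).mkQ (v - Finsupp.linearCombination ℤ (psi0 f) v) ∈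
      LinearMap.range (symEmbed g m) := by
  induction v using Finsupp.induction_linear with
  | zero => simp
  | add v w hv hw =>
    have := add_mem hv hw
    rw [← map_add] at this
    convert this using 2
    rw [map_add]; abel
  | single w a =>
    have key : (dihedralAug g (2 * m - 1)).mkQ (Finsupp.single w 1 - psi0 f w) ∈
        LinearMap.range (symEmbed g m) := by
      have hrep : ∀ w : DWord g (2 * m - 1), (dihedralAug g (2 * m - 1)).mkQ
          (Finsupp.single (rep w) 1) = (dihedralAug g (2 * m - 1)).mkQ (Finsupp.single w 1) := by
        intro w
        obtain ⟨k, hk⟩ := rep_spec w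
        conv_rhs => rw [hk, mk_rot]
      unfold psi0
      split_ifs with h1 h2
      · rw [map_sub, hrep, sub_self]; exact zero_mem _
      · rw [map_sub, map_neg, hrep, mk_rv hn, neg_neg, sub_self]; exact zero_mem _
      · obtain ⟨k, u, hu⟩ := achiral hm w (hf (by omega))
        refine ⟨Finsupp.single u 1, ?_⟩
        rw [sub_zero, hu, mk_rot]
        simp [symEmbed, Finsupp.mapDomain_single]
    have := Submodule.smul_mem _ a key
    rw [← map_smul] at this
    convert this using 2
    rw [smul_sub, Finsupp.linearCombination_single]
    simp

end sym

end DihAux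

/-- Let `n = 2m-1 ≥ 3` be odd and `g ≥ 1`.  The `ℤ`-linear map
`H^{⊗m} → (H^{⊗n})_{D_{2n}}`, `a_1⊗⋯⊗a_m ↦ [a_1⊗⋯⊗a_{m-1}⊗a_m⊗a_m⊗a_{m-1}⊗⋯⊗a_2]`,
kills `2·H^{⊗m}` (hence induces a well-defined `ℤ/2ℤ`-linear map on `H^{⊗m} ⊗ ℤ/2ℤ`),
its kernel is exactly `2·H^{⊗m}` (so the induced map is injective), and its image is
exactly the torsion subgroup of `(H^{⊗n})_{D_{2n}}`. -/
theorem stmt_3 (g m : ℕ) (hg : 1 ≤ g) (hm : 2 ≤ m) [NeZero (2 * m - 1)] :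
    (∀ v, symEmbed g m ((2 : ℤ) • v) = 0) ∧
    (∀ v, symEmbed g m v = 0 ↔ ∃ u, v = (2 : ℤ) • u) ∧
    LinearMap.range (symEmbed g m) = Submodule.torsion ℤ (DCoinv g (2 * m - 1)) := by
  have hn : Odd (2 * m - 1) := ⟨m - 1, by omega⟩
  refine ⟨DihAux.two_kill hn, ?_, ?_⟩
  · intro v
    constructor
    · intro hv
      have h2 : ∀ u, (2 : ℤ) ∣ v u := fun u =>
        (ZMod.intCast_zmod_eq_zero_iff_dvd (v u) 2).1 (DihAux.coef hm hn v hv u)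
      refine ⟨v.mapRange (fun a => a / 2) (by simp), ?_⟩
      ext u
      have := h2 u
      simp only [Finsupp.smul_apply, Finsupp.mapRange_apply, smul_eq_mul]
      omega
    · rintro ⟨u, rfl⟩
      exact DihAux.two_kill hn u
  · apply le_antisymm
    · rintro _ ⟨v, rfl⟩
      rw [Submodule.mem_torsion_iff]
      refine ⟨⟨2, by simp⟩, ?_⟩
      have := DihAux.two_kill hn v
      rw [map_smul] at this
      exact this
    · intro x hx
      rw [Submodule.mem_torsion_iff] at hx
      obtain ⟨⟨a, ha⟩, hx⟩ := hx
      obtain ⟨v, rfl⟩ := Submodule.mkQ_surjective _ x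
      obtain ⟨f, hf⟩ := DihAux.exists_code g (2 * m - 1)
      have hker := DihAux.aug_le_ker hn (Finsupp.linearCombination ℤ (DihAux.psi0 f))
        (by intro k w; simp [DihAux.psi0_rot])
        (by intro w; simp [DihAux.psi0_rv])
      have hmem : a • v ∈ dihedralAug g (2 * m - 1) := by
        rw [← Submodule.Quotient.mk_eq_zero]
        exact hx
      have h0 : Finsupp.linearCombination ℤ (DihAux.psi0 f) (a • v) = 0 := hker hmem
      rw [map_smul, smul_eq_zero] at h0
      have h1 := h0.resolve_left (nonZeroDivisors.ne_zero ha)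
      have := DihAux.psi_congr hm hn f hf v
      rwa [h1, sub_zero] at this
end

section
/- Let n = 2m−1 ≥ 1 be odd. The map A^m → {necklaces of length n over A} sending (a_1, a_2, …, a_m) to the necklace (rotation class) of the word a_1a_2⋯a_{m−1}a_m a_m a_{m−1}⋯a_2 of length n is a bijection from A^m onto the set of symmetric necklaces of length n. -/
/-- Two words `w, w'` of length `N` (functions `ZMod N → A`) are related iff `w'` is a
rotation of `w`, i.e. `w' = k·w` where `(k·w)(i) = w(i−k)`.  Necklaces are the orbits,
i.e. the elements of `Quot (rotRel N A)`. -/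
def rotRel (N : ℕ) (A : Type*) : (ZMod N → A) → (ZMod N → A) → Prop :=
  fun w w' => ∃ k : ZMod N, ∀ i, w' i = w (i - k)

/-- A word `w` of length `N` is symmetric iff there is `k` with `w(−i) = w(k+i)` for
all `i` (equivalently, its necklace is invariant under reversal). -/
def IsSymWord (N : ℕ) (A : Type*) (w : ZMod N → A) : Prop :=
  ∃ k : ZMod N, ∀ i, w (-i) = w (k + i)

/-- The word `a_1 a_2 ⋯ a_{m−1} a_m a_m a_{m−1} ⋯ a_2` of length `n = 2m−1` associated
to `(a_1, …, a_m) ∈ A^m` (0-indexed: `f i = a_{i+1}`). -/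
def symNeckWord (m : ℕ) [NeZero (2 * m - 1)] {A : Type*} (f : Fin m → A) :
    ZMod (2 * m - 1) → A :=
  fun j =>
    if h : (ZMod.val j) < m then f ⟨ZMod.val j, h⟩
    else f ⟨2 * m - 1 - ZMod.val j, by
      have h1 := ZMod.val_lt j
      have h2 := NeZero.ne (2 * m - 1)
      omega⟩

lemma rotRel_equiv (N : ℕ) (A : Type*) : Equivalence (rotRel N A) := by
  refine ⟨fun w => ⟨0, by simp⟩, ?_, ?_⟩
  · rintro x y ⟨k, hk⟩
    exact ⟨-k, fun i => by rw [hk]; congr 1; ring⟩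
  · rintro x y z ⟨k, hk⟩ ⟨l, hl⟩
    exact ⟨k + l, fun i => by rw [hl, hk]; congr 1; ring⟩

lemma two_mul_m_eq (m : ℕ) (hm : 1 ≤ m) : (2 : ZMod (2 * m - 1)) * (m : ZMod (2 * m - 1)) = 1 := by
  have h : ((2 * m - 1 + 1 : ℕ) : ZMod (2 * m - 1)) = ((2 * m : ℕ) : ZMod (2 * m - 1)) := by
    congr 1; omega
  rw [Nat.cast_add, ZMod.natCast_self] at h
  push_cast at h
  rw [← h]; ring

lemma symNeckWord_even (m : ℕ) [NeZero (2 * m - 1)] {A : Type*} (f : Fin m → A)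
    (i : ZMod (2 * m - 1)) : symNeckWord m f (-i) = symNeckWord m f i := by
  by_cases hi : i = 0
  · simp [hi]
  have h1 : (-i).val = 2 * m - 1 - i.val := by
    rw [ZMod.neg_val, if_neg hi]
  have h2 := ZMod.val_lt i
  have h3 : i.val ≠ 0 := by rwa [Ne, ZMod.val_eq_zero]
  unfold symNeckWord
  split_ifs with ha hb hb
  · omega
  · congr 1; ext; exact h1
  · congr 1; ext; simp only [h1]; omega
  · omega

lemma symNeckWord_natCast (m : ℕ) [NeZero (2 * m - 1)] {A : Type*} (f : Fin m → A)
    (i : Fin m) : symNeckWord m f ((i : ℕ) : ZMod (2 * m - 1)) = f i := by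
  have h : ((i : ℕ) : ZMod (2 * m - 1)).val = i := by
    apply ZMod.val_cast_of_lt
    have := i.2
    have h2 := NeZero.ne (2 * m - 1)
    omega
  unfold symNeckWord
  rw [dif_pos (by rw [h]; exact i.2)]
  congr 1; ext; exact h

lemma symNeckWord_of_even (m : ℕ) [NeZero (2 * m - 1)] {A : Type*} (w : ZMod (2 * m - 1) → A)
    (hw : ∀ i, w (-i) = w i) :
    symNeckWord m (fun i : Fin m => w ((i : ℕ) : ZMod (2 * m - 1))) = w := by
  funext j
  unfold symNeckWord
  split_ifs with h
  · simp
  · have h2 := ZMod.val_lt j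
    simp only
    rw [Nat.cast_sub h2.le, ZMod.natCast_self, ZMod.natCast_zmod_val, zero_sub, hw]

theorem stmt_5 (m : ℕ) (hm : 1 ≤ m) [NeZero (2 * m - 1)] (A : Type*) [Fintype A] :
    Function.Injective
      (fun f : Fin m → A => Quot.mk (rotRel (2 * m - 1) A) (symNeckWord m f)) ∧
    Set.range (fun f : Fin m → A => Quot.mk (rotRel (2 * m - 1) A) (symNeckWord m f)) =
      {c | ∃ w : ZMod (2 * m - 1) → A,
        IsSymWord (2 * m - 1) A w ∧ Quot.mk (rotRel (2 * m - 1) A) w = c} := by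
  have h2m := two_mul_m_eq m hm
  constructor
  · intro f g hfg
    have hr : rotRel (2 * m - 1) A (symNeckWord m f) (symNeckWord m g) :=
      (rotRel_equiv _ A).eqvGen_iff.1 (Quot.eqvGen_exact hfg)
    obtain ⟨k, hk⟩ := hr
    have hp : Function.Periodic (symNeckWord m f) (2 * k) := by
      intro j
      have e1 := hk (j + k)
      have e2 := hk (-(j + k))
      rw [symNeckWord_even] at e2
      rw [show j + k - k = j by ring] at e1
      rw [show -(j + k) - k = -(j + 2 * k) by ring, symNeckWord_even] at e2
      rw [← e2, e1]
    have hpk : Function.Periodic (symNeckWord m f) k := by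
      have := hp.nat_mul m
      rwa [show (m : ZMod (2 * m - 1)) * (2 * k) = k by linear_combination k * h2m] at this
    have he : symNeckWord m g = symNeckWord m f := by
      funext i
      rw [hk, hpk.sub_eq]
    funext i
    rw [← symNeckWord_natCast m f i, ← symNeckWord_natCast m g i, he]
  · ext c
    constructor
    · rintro ⟨f, rfl⟩
      exact ⟨_, ⟨0, fun i => by rw [symNeckWord_even, zero_add]⟩, rfl⟩
    · rintro ⟨w, ⟨k, hk⟩, rfl⟩
      have hw : ∀ i, w (-i + m * k) = w (i + m * k) := by
        intro i
        have := hk (i - m * k)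
        rw [show -(i - m * k) = -i + m * k by ring] at this
        rw [this]
        congr 1
        linear_combination (-k) * h2m
      refine ⟨fun i : Fin m => w (((i : ℕ) : ZMod (2 * m - 1)) + m * k), ?_⟩
      have := symNeckWord_of_even m (fun i => w (i + m * k)) hw
      simp only at this ⊢
      rw [this]
      exact Quot.sound ⟨m * k, fun i => by simp only [sub_add_cancel]⟩
end

section
/- Let n ≥ 1 be odd and q ≥ 1. Then the number of symmetric necklaces of length n over an alphabet with q elements equals q^{(n+1)/2}. -/
theorem rotRel_equivalence (n : ℕ) (A : Type*) : Equivalence (rotRel n A) := by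
  refine ⟨fun w => ⟨0, by simp⟩, ?_, ?_⟩
  · rintro w w' ⟨k, h⟩
    exact ⟨-k, fun i => by rw [h]; congr 1; ring⟩
  · rintro w w' w'' ⟨k, h⟩ ⟨l, h'⟩
    exact ⟨l + k, fun i => by rw [h', h]; congr 1; ring⟩

theorem card_even_words (m : ℕ) (A : Type*) :
    Nat.card {w : ZMod (2 * m + 1) → A // ∀ i, w (-i) = w i} = Nat.card A ^ (m + 1) := by
  have e : {w : ZMod (2 * m + 1) → A // ∀ i, w (-i) = w i} ≃ (Fin (m + 1) → A) :=
    { toFun := fun w j => w.1 ((j : ℕ) : ZMod (2 * m + 1))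
      invFun := fun u => ⟨fun i => u ⟨i.valMinAbs.natAbs, by
          have := ZMod.natAbs_valMinAbs_le i
          omega⟩, fun i => by simp only [ZMod.natAbs_valMinAbs_neg]⟩
      left_inv := by
        rintro ⟨w, hw⟩
        ext i
        show w ((i.valMinAbs.natAbs : ℕ) : ZMod (2 * m + 1)) = w i
        have hi := ZMod.coe_valMinAbs i
        rcases Int.natAbs_eq i.valMinAbs with h | h
        · rw [h] at hi
          push_cast at hi
          simpa using congrArg w hi
        · rw [h] at hi
          rw [← hw]
          congr 1
          simpa using hi
      right_inv := by
        intro u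
        ext j
        show u _ = u j
        congr 1
        apply Fin.ext
        show (((j : ℕ) : ZMod (2 * m + 1)).valMinAbs).natAbs = j
        rw [ZMod.valMinAbs_natCast_of_le_half (by omega)]
        simp }
  rw [Nat.card_congr e, Nat.card_fun]
  simp

/-- For `n ≥ 1` odd and an alphabet `A` with `q ≥ 1` elements, the number of symmetric
necklaces of length `n` over `A` equals `q^{(n+1)/2}`. -/
theorem stmt_6 (n q : ℕ) (hodd : Odd n) (A : Type*) [Fintype A]
    (hq : 1 ≤ q) (hA : Nat.card A = q) :
    Nat.card {c : Quot (rotRel n A) //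
      ∃ w : ZMod n → A, IsSymWord n A w ∧ Quot.mk (rotRel n A) w = c} =
      q ^ ((n + 1) / 2) := by
  obtain ⟨m, rfl⟩ := hodd
  subst hA
  have hm : (2 * m + 1 + 1) / 2 = m + 1 := by omega
  rw [hm, ← card_even_words]
  symm
  have h0 : (2 * (m : ZMod (2 * m + 1)) + 1) = 0 := by
    exact_mod_cast ZMod.natCast_self (2 * m + 1)
  apply Nat.card_congr
  refine Equiv.ofBijective (fun w => ⟨Quot.mk _ w.1, w.1, ⟨0, fun i => by simpa using w.2 i⟩, rfl⟩) ⟨?_, ?_⟩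
  · rintro ⟨w, hw⟩ ⟨w', hw'⟩ h
    have h1 : Quot.mk (rotRel (2 * m + 1) A) w = Quot.mk _ w' := congrArg Subtype.val h
    rw [Quot.eq, (rotRel_equivalence _ _).eqvGen_iff] at h1
    obtain ⟨k, hk⟩ := h1
    have per : ∀ i, w (i + 2 * k) = w i := fun i => by
      have e1 := hk (-(i + k))
      have e2 := hk (i + k)
      rw [hw', e2, ← hw (-(i + k) - k)] at e1
      have a1 : i + k - k = i := by ring
      have a2 : -(-(i + k) - k) = i + 2 * k := by ring
      rw [a1, a2] at e1
      exact e1.symm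
    have pern : ∀ (t : ℕ) i, w (i + t * (2 * k)) = w i := by
      intro t
      induction t with
      | zero => intro i; simp
      | succ t ih =>
        intro i
        rw [← ih i, ← per (i + t * (2 * k))]
        congr 1
        push_cast
        ring
    apply Subtype.ext
    funext i
    show w i = w' i
    rw [hk, ← pern m i]
    congr 1
    linear_combination k * h0
  · rintro ⟨c, w, ⟨k, hk⟩, rfl⟩
    refine ⟨⟨fun i => w (i - m * k), fun i => ?_⟩, ?_⟩
    · have := hk (i + m * k)
      show w (-i - m * k) = w (i - m * k)
      have a1 : -i - m * k = -(i + m * k) := by ring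
      rw [a1, this]
      congr 1
      linear_combination k * h0
    · apply Subtype.ext
      exact (Quot.sound ⟨m * k, fun i => rfl⟩).symm
end

section
/- For every n ≥ 2 and g ≥ 1 there are isomorphisms of abelian groups (H^{⊗n})_{D_{2n}} ⊗ M ≅ P_{2n} ⊗ M and S_n ≅ P^s_{2n} ⊗ M, where M = ℤ if n is even and M = ℤ/2ℤ if n is odd, both induced by the doubling assignment on basis tensors b_1⊗⋯⊗b_n ↦ b_1⊗⋯⊗b_n⊗b_1⊗⋯⊗b_n. -/
open TensorProduct

/-- The doubling of a basis word: `b_1⋯b_n ↦ b_1⋯b_n b_1⋯b_n` (i.e. `i ↦ w (i mod n)`),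
indexing the basis tensor `b_1⊗⋯⊗b_n⊗b_1⊗⋯⊗b_n`. -/
def dblWord (g n : ℕ) (w : DWord g n) : DWord g (2 * n) :=
  fun i => w (ZMod.castHom (dvd_mul_left n 2) (ZMod n) i)

/-- A basis word (tensor) `a_1⊗⋯⊗a_m` is symmetric if there is `k` with
`a_{m−i} = a_{k+i}` for all `i` (indices mod `m`); 0-indexed this reads
`∃ k, ∀ i, w(−i) = w(k+i)` up to shifting `k`. -/
def IsSymTensor (g m : ℕ) (w : DWord g m) : Prop :=
  ∃ k : ZMod m, ∀ i, w (-i) = w (k + i)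

/-- `S_n`: the submodule of `(H^{⊗n})_{D_{2n}}` generated by the classes of the
symmetric basis tensors. -/
noncomputable def Ssub (g n : ℕ) : Submodule ℤ (DCoinv g n) :=
  Submodule.span ℤ {c | ∃ w : DWord g n, IsSymTensor g n w ∧
    c = Submodule.Quotient.mk (Finsupp.single w 1)}

/-- `P_{2n}`: the submodule of `(H^{⊗2n})_{D_{4n}}` generated by the classes of the
periodic basis tensors `b_1⊗⋯⊗b_n⊗b_1⊗⋯⊗b_n`. -/
noncomputable def Psub (g n : ℕ) : Submodule ℤ (DCoinv g (2 * n)) :=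
  Submodule.span ℤ (Set.range fun w : DWord g n =>
    (Submodule.Quotient.mk (Finsupp.single (dblWord g n w) 1) : DCoinv g (2 * n)))

/-- `P^s_{2n}`: the submodule of `(H^{⊗2n})_{D_{4n}}` generated by the classes of the
periodic basis tensors that are in addition symmetric. -/
noncomputable def PsSub (g n : ℕ) : Submodule ℤ (DCoinv g (2 * n)) :=
  Submodule.span ℤ {c | ∃ w : DWord g n, IsSymTensor g (2 * n) (dblWord g n w) ∧
    c = Submodule.Quotient.mk (Finsupp.single (dblWord g n w) 1)}


namespace Dbl

def rot {g n : ℕ} (w : DWord g n) : DWord g n := fun i => w (i - 1)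
def rev {g n : ℕ} (w : DWord g n) : DWord g n := fun i => w (-i - 1)

noncomputable def cl {g n : ℕ} (w : DWord g n) : DCoinv g n :=
  Submodule.Quotient.mk (Finsupp.single w 1)

lemma rev_rev {g n : ℕ} (w : DWord g n) : rev (rev w) = w := by
  funext i; simp [rev]

lemma rotMap_single {g n : ℕ} (w : DWord g n) :
    rotMap g n (Finsupp.single w 1) = Finsupp.single (rot w) 1 := by
  rw [rotMap, Finsupp.lmapDomain_apply, Finsupp.mapDomain_single]
  rfl

lemma revMap_single {g n : ℕ} (w : DWord g n) :
    revMap g n (Finsupp.single w 1) = ((-1 : ℤ) ^ n) • Finsupp.single (rev w) (1 : ℤ) := by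
  rw [revMap, LinearMap.smul_apply, Finsupp.lmapDomain_apply, Finsupp.mapDomain_single]
  rfl

lemma cl_rot {g n : ℕ} (w : DWord g n) : cl (rot w) = cl w := by
  symm
  refine (Submodule.Quotient.eq _).2 (Submodule.subset_span ⟨1, Finsupp.single w 1, Or.inl ?_⟩)
  rw [pow_one, rotMap_single]

lemma cl_rev {g n : ℕ} (w : DWord g n) : ((-1 : ℤ) ^ n) • cl (rev w) = cl w := by
  symm
  rw [cl, cl, ← Submodule.Quotient.mk_smul]
  refine (Submodule.Quotient.eq _).2 (Submodule.subset_span ⟨0, Finsupp.single w 1, Or.inr ?_⟩)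
  rw [pow_zero, one_mul, revMap_single]

lemma desc {g n : ℕ} {A : Type*} [AddCommGroup A] (f : DWord g n → A)
    (hrot : ∀ w, f (rot w) = f w) (hrev : ∀ w, ((-1 : ℤ) ^ n) • f (rev w) = f w) :
    ∃ F : DCoinv g n →ₗ[ℤ] A, ∀ w, F (cl w) = f w := by
  let L : (DWord g n →₀ ℤ) →ₗ[ℤ] A := Finsupp.linearCombination ℤ f
  have h1 : L ∘ₗ rotMap g n = L := by
    refine Finsupp.lhom_ext' fun w => LinearMap.ext_ring ?_
    simpa [L, rotMap_single] using hrot w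
  have h2 : L ∘ₗ revMap g n = L := by
    refine Finsupp.lhom_ext' fun w => LinearMap.ext_ring ?_
    change L (revMap g n (Finsupp.single w 1)) = L (Finsupp.single w 1)
    rw [revMap_single, map_smul]
    simpa only [L, Finsupp.linearCombination_single, one_smul] using hrev w
  have h3 : ∀ (k : ℕ) v, L ((rotMap g n ^ k) v) = L v := by
    intro k
    induction k with
    | zero => intro v; simp
    | succ k ih =>
      intro v
      rw [pow_succ, Module.End.mul_apply, ih]
      exact LinearMap.congr_fun h1 v
  have hle : dihedralAug g n ≤ LinearMap.ker L := by
    refine Submodule.span_le.2 ?_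
    rintro u ⟨k, v, rfl | rfl⟩
    · simp [h3]
    · have := LinearMap.congr_fun h2 v
      simp only [LinearMap.comp_apply] at this
      simp [h3, this]
  refine ⟨(dihedralAug g n).liftQ L hle, fun w => ?_⟩
  have : (dihedralAug g n).liftQ L hle (cl w) = L (Finsupp.single w 1) :=
    Submodule.liftQ_apply _ _ _
  rw [this]; simp [L]

lemma hom_ext {g n : ℕ} {A : Type*} [AddCommGroup A] {F G : DCoinv g n →ₗ[ℤ] A}
    (h : ∀ w, F (cl w) = G (cl w)) : F = G := by
  refine Submodule.linearMap_qext _ (Finsupp.lhom_ext' fun w => LinearMap.ext_ring ?_)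
  exact h w

lemma cast_surj (n : ℕ) : Function.Surjective (ZMod.castHom (dvd_mul_left n 2) (ZMod n)) :=
  ZMod.castHom_surjective _

lemma dbl_inj (g n : ℕ) : Function.Injective (dblWord g n) := by
  intro w w' h
  funext i
  obtain ⟨j, rfl⟩ := cast_surj n i
  exact congrFun h j

lemma dbl_rot {g n : ℕ} (w : DWord g n) : rot (dblWord g n w) = dblWord g n (rot w) := by
  funext i
  simp only [rot, dblWord, map_sub, map_one]

lemma dbl_rev {g n : ℕ} (w : DWord g n) : rev (dblWord g n w) = dblWord g n (rev w) := by
  funext i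
  simp only [rev, dblWord, map_sub, map_neg, map_one]

lemma pull {g n : ℕ} {A : Type*} [AddCommGroup A] (f : DWord g n → A)
    (hrot : ∀ w, f (rot w) = f w) (hrev : ∀ w, f (rev w) = f w) :
    ∃ F : DCoinv g (2 * n) →ₗ[ℤ] A, ∀ w, F (cl (dblWord g n w)) = f w := by
  obtain ⟨F, hF⟩ := desc (Function.extend (dblWord g n) f 0) (g := g) (n := 2 * n) (by
    intro u
    by_cases h : ∃ w, dblWord g n w = u
    · obtain ⟨w, rfl⟩ := h
      rw [dbl_rot, (dbl_inj g n).extend_apply, (dbl_inj g n).extend_apply, hrot]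
    · rw [Function.extend_apply' _ _ _ h, Function.extend_apply']
      · rfl
      · rintro ⟨w, hw⟩
        refine h ⟨fun i => w (i + 1), ?_⟩
        funext i
        have := congrFun hw (i + 1)
        simpa only [rot, dblWord, map_add, map_one, add_sub_cancel_right] using this) (by
    intro u
    rw [(even_two_mul n).neg_one_pow, one_smul]
    by_cases h : ∃ w, dblWord g n w = u
    · obtain ⟨w, rfl⟩ := h
      rw [dbl_rev, (dbl_inj g n).extend_apply, (dbl_inj g n).extend_apply, hrev]
    · rw [Function.extend_apply' _ _ _ h, Function.extend_apply']
      · rfl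
      · rintro ⟨w, hw⟩
        refine h ⟨rev w, ?_⟩
        rw [← dbl_rev, hw, rev_rev])
  exact ⟨F, fun w => by rw [hF, (dbl_inj g n).extend_apply]⟩

lemma sym_rot' {g n : ℕ} {w : DWord g n} (h : IsSymTensor g n w) : IsSymTensor g n (rot w) := by
  obtain ⟨k, hk⟩ := h
  refine ⟨k + 2, fun i => ?_⟩
  have := hk (i + 1)
  simp only [rot]
  convert this using 2 <;> ring

lemma sym_rot {g n : ℕ} (w : DWord g n) : IsSymTensor g n (rot w) ↔ IsSymTensor g n w := by
  refine ⟨?_, sym_rot'⟩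
  rintro ⟨k, hk⟩
  refine ⟨k - 2, fun i => ?_⟩
  have := hk (i - 1)
  simp only [rot] at this
  convert this using 2 <;> ring

lemma sym_rev' {g n : ℕ} {w : DWord g n} (h : IsSymTensor g n w) : IsSymTensor g n (rev w) := by
  obtain ⟨k, hk⟩ := h
  refine ⟨- k - 2, fun i => ?_⟩
  have := hk (1 - i)
  simp only [rev]
  convert this using 2 <;> ring

lemma sym_rev {g n : ℕ} (w : DWord g n) : IsSymTensor g n (rev w) ↔ IsSymTensor g n w :=
  ⟨fun h => by simpa [rev_rev] using sym_rev' h, sym_rev'⟩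

lemma sym_dbl {g n : ℕ} (w : DWord g n) :
    IsSymTensor g (2 * n) (dblWord g n w) ↔ IsSymTensor g n w := by
  constructor
  · rintro ⟨k, hk⟩
    refine ⟨ZMod.castHom (dvd_mul_left n 2) (ZMod n) k, fun i => ?_⟩
    obtain ⟨j, rfl⟩ := cast_surj n i
    simpa only [dblWord, map_neg, map_add] using hk j
  · rintro ⟨k, hk⟩
    obtain ⟨l, rfl⟩ := cast_surj n k
    refine ⟨l, fun i => ?_⟩
    simpa only [dblWord, map_neg, map_add] using hk _

lemma cl_shift {g n : ℕ} (w : DWord g n) (c : ℕ) : cl (fun i : ZMod n => w (i - (c : ZMod n))) = cl w := by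
  induction c with
  | zero => simp
  | succ c ih =>
    rw [← ih, ← cl_rot (fun i : ZMod n => w (i - (c : ZMod n)))]
    congr 1
    funext i
    simp only [rot]
    congr 1
    push_cast; ring

lemma sym_cl {g n : ℕ} [NeZero n] {w : DWord g n} (h : IsSymTensor g n w) :
    cl (rev w) = cl w := by
  obtain ⟨k, hk⟩ := h
  rw [← cl_shift w (-(k + 1)).val]
  congr 1
  funext i
  have := hk (i + 1)
  simp only [rev, ZMod.natCast_val, ZMod.cast_id', id]
  convert this using 2 <;> ring

lemma exists_lift {A B : Type*} [AddCommGroup A] [AddCommGroup B] (h : ∀ b : B, 2 • b = 0)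
    (f : A →ₗ[ℤ] B) : ∃ F : A ⊗[ℤ] ZMod 2 →ₗ[ℤ] B, ∀ a, F (a ⊗ₜ 1) = f a := by
  letI : Module (ZMod 2) B := AddCommGroup.zmodModule h
  refine ⟨TensorProduct.lift (LinearMap.mk₂ ℤ (fun a z => z • f a) ?_ ?_ ?_ ?_), ?_⟩
  · intros; simp
  · intro c a z; rw [map_smul, smul_comm]
  · intros; simp [add_smul]
  · intro c a z; rw [smul_assoc]
  · intro a; exact one_smul (ZMod 2) (f a)

lemma tmul_two {A : Type*} [AddCommGroup A] (b : A ⊗[ℤ] ZMod 2) : 2 • b = 0 := by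
  induction b with
  | zero => simp
  | add x y hx hy => rw [smul_add, hx, hy, add_zero]
  | tmul a z =>
    rw [← TensorProduct.tmul_smul]
    have : (2 : ℕ) • z = 0 := by revert z; decide
    rw [this, TensorProduct.tmul_zero]

lemma tensor_ext {A B : Type*} [AddCommGroup A] [AddCommGroup B]
    {F G : A ⊗[ℤ] ZMod 2 →ₗ[ℤ] B} (h : ∀ a, F (a ⊗ₜ 1) = G (a ⊗ₜ 1)) : F = G := by
  refine TensorProduct.ext' fun a z => ?_
  fin_cases z
  · change F (a ⊗ₜ 0) = G (a ⊗ₜ 0)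
    simp
  · exact h a

lemma span_ext {A B : Type*} [AddCommGroup A] [AddCommGroup B] {s : Set A}
    {F G : Submodule.span ℤ s →ₗ[ℤ] B}
    (h : ∀ a (ha : a ∈ s), F ⟨a, Submodule.subset_span ha⟩ = G ⟨a, Submodule.subset_span ha⟩) :
    F = G := by
  refine LinearMap.ext fun ⟨x, hx⟩ => ?_
  induction hx using Submodule.span_induction with
  | mem x hx => exact h x hx
  | zero => exact (map_zero F).trans (map_zero G).symm
  | add x y hx hy h1 h2 =>
    have := congrArg₂ (· + ·) h1 h2
    simp only [← map_add] at this
    exact this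
  | smul c x hx h1 =>
    have := congrArg (c • ·) h1
    simp only [← map_smul] at this
    exact this

lemma char_two {B : Type*} [AddCommGroup B] (h : ∀ b : B, 2 • b = 0) {n : ℕ} (b : B) :
    ((-1 : ℤ) ^ n) • b = b := by
  rcases Nat.even_or_odd n with hn | hn
  · simp [hn.neg_one_pow]
  · rw [hn.neg_one_pow, neg_one_smul]
    have := h b
    rw [two_smul] at this
    exact neg_eq_of_add_eq_zero_left this

lemma even_case (g n : ℕ) (hn : Even n) :
    ∃ D : DCoinv g n →ₗ[ℤ] DCoinv g (2 * n), Function.Injective D ∧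
      ∀ w, D (cl w) = cl (dblWord g n w) := by
  have h1 : ∀ w : DWord g n, cl (rev w) = cl w := fun w => by
    simpa [hn.neg_one_pow] using cl_rev w
  have h2 : ∀ w : DWord g (2 * n), cl (rev w) = cl w := fun w => by
    simpa [(even_two_mul n).neg_one_pow] using cl_rev w
  obtain ⟨D, hD⟩ := desc (fun w : DWord g n => cl (dblWord g n w))
    (fun w => by rw [← dbl_rot, cl_rot])
    (fun w => by rw [hn.neg_one_pow, one_smul, ← dbl_rev, h2])
  obtain ⟨R, hR⟩ := pull (fun w : DWord g n => cl w) cl_rot h1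
  have : R ∘ₗ D = LinearMap.id := hom_ext fun w => by simp [hD, hR]
  exact ⟨D, Function.LeftInverse.injective (g := R) (LinearMap.congr_fun this), hD⟩

lemma span_cl (g n : ℕ) : Submodule.span ℤ (Set.range (cl : DWord g n → DCoinv g n)) = ⊤ := by
  rw [← Submodule.ker_mkQ (Submodule.span ℤ (Set.range (cl : DWord g n → DCoinv g n)))]
  rw [LinearMap.ker_eq_top]
  refine hom_ext fun w => ?_
  rw [LinearMap.zero_apply, Submodule.mkQ_apply, Submodule.Quotient.mk_eq_zero]
  exact Submodule.subset_span ⟨w, rfl⟩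

lemma even_P (g n : ℕ) (hn : Even n) : ∃ e : DCoinv g n ≃ₗ[ℤ] Psub g n,
    ∀ w : DWord g n, (e (cl w) : DCoinv g (2 * n)) = cl (dblWord g n w) := by
  obtain ⟨D, hi, hD⟩ := even_case g n hn
  have hr : LinearMap.range D = Psub g n := by
    rw [LinearMap.range_eq_map, ← span_cl, Submodule.map_span, ← Set.range_comp]
    exact congrArg _ (congrArg _ (funext hD))
  refine ⟨(LinearEquiv.ofInjective D hi).trans (LinearEquiv.ofEq _ _ hr), fun w => ?_⟩
  exact hD w

lemma even_S (g n : ℕ) (hn : Even n) : ∃ e : Ssub g n ≃ₗ[ℤ] PsSub g n,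
    ∀ (w : DWord g n) (h : IsSymTensor g n w),
      (e ⟨cl w, Submodule.subset_span ⟨w, h, rfl⟩⟩ : DCoinv g (2 * n)) = cl (dblWord g n w) := by
  obtain ⟨D, hi, hD⟩ := even_case g n hn
  have hr : (Ssub g n).map D = PsSub g n := by
    rw [Ssub, Submodule.map_span, PsSub]
    congr 1
    ext c
    constructor
    · rintro ⟨_, ⟨w, hw, rfl⟩, rfl⟩
      exact ⟨w, (sym_dbl w).2 hw, hD w⟩
    · rintro ⟨w, hw, rfl⟩
      exact ⟨_, ⟨w, (sym_dbl w).1 hw, rfl⟩, hD w⟩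
  refine ⟨((Ssub g n).equivMapOfInjective D hi).trans (LinearEquiv.ofEq _ _ hr), fun w _ => ?_⟩
  exact hD w

lemma odd_P (g n : ℕ) : ∃ e : (DCoinv g n ⊗[ℤ] ZMod 2) ≃ₗ[ℤ] ((Psub g n) ⊗[ℤ] ZMod 2),
    ∀ w : DWord g n, LinearMap.rTensor (ZMod 2) (Psub g n).subtype (e (cl w ⊗ₜ[ℤ] (1 : ZMod 2))) =
      cl (dblWord g n w) ⊗ₜ[ℤ] (1 : ZMod 2) := by
  have h2 : ∀ w : DWord g (2 * n), cl (rev w) = cl w := fun w => by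
    simpa [(even_two_mul n).neg_one_pow] using cl_rev w
  let p : DWord g n → Psub g n := fun w => ⟨cl (dblWord g n w), Submodule.subset_span ⟨w, rfl⟩⟩
  obtain ⟨D0, hD0⟩ := desc (fun w : DWord g n => p w ⊗ₜ[ℤ] (1 : ZMod 2))
    (fun w => by
      have : p (rot w) = p w := Subtype.ext (by simp only [p]; rw [← dbl_rot, cl_rot])
      rw [this])
    (fun w => by
      have : p (rev w) = p w := Subtype.ext (by simp only [p]; rw [← dbl_rev, h2])
      rw [this, char_two tmul_two])
  obtain ⟨D, hD⟩ := exists_lift tmul_two D0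
  obtain ⟨R0, hR0⟩ := pull (fun w : DWord g n => cl w ⊗ₜ[ℤ] (1 : ZMod 2))
    (fun w => by rw [cl_rot])
    (fun w => by
      rw [← cl_rev w, ← TensorProduct.smul_tmul', char_two tmul_two])
  obtain ⟨R, hR⟩ := exists_lift tmul_two (R0 ∘ₗ (Psub g n).subtype)
  have hDR : D ∘ₗ R = LinearMap.id := by
    refine tensor_ext fun a => ?_
    have : D ∘ₗ (R0 ∘ₗ (Psub g n).subtype) = (TensorProduct.mk ℤ _ (ZMod 2)).flip 1 := by
      refine span_ext ?_
      rintro _ ⟨w, rfl⟩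
      change D (R0 (cl (dblWord g n w))) = p w ⊗ₜ 1
      rw [hR0, hD, hD0]
    rw [LinearMap.comp_apply, hR]
    exact LinearMap.congr_fun this a
  have hRD : R ∘ₗ D = LinearMap.id := by
    refine tensor_ext fun a => ?_
    have : R ∘ₗ D0 = (TensorProduct.mk ℤ _ (ZMod 2)).flip 1 := by
      refine hom_ext fun w => ?_
      rw [LinearMap.comp_apply, hD0, hR]
      exact hR0 w
    rw [LinearMap.comp_apply, hD]
    exact LinearMap.congr_fun this a
  refine ⟨LinearEquiv.ofLinearMap D R hDR hRD, fun w => ?_⟩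
  rw [LinearEquiv.coe_ofLinearMap, hD, hD0]
  rfl

lemma odd_S (g n : ℕ) [NeZero n] (hn : Odd n) : ∃ e : Ssub g n ≃ₗ[ℤ] ((PsSub g n) ⊗[ℤ] ZMod 2),
    ∀ (w : DWord g n) (h : IsSymTensor g n w),
      LinearMap.rTensor (ZMod 2) (PsSub g n).subtype
        (e ⟨cl w, Submodule.subset_span ⟨w, h, rfl⟩⟩) =
      cl (dblWord g n w) ⊗ₜ[ℤ] (1 : ZMod 2) := by
  classical
  have h2 : ∀ w : DWord g (2 * n), cl (rev w) = cl w := fun w => by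
    simpa [(even_two_mul n).neg_one_pow] using cl_rev w
  let p : DWord g n → PsSub g n := fun w =>
    if h : IsSymTensor g n w then
      ⟨cl (dblWord g n w), Submodule.subset_span ⟨w, (sym_dbl w).2 h, rfl⟩⟩ else 0
  let q : DWord g n → Ssub g n := fun w =>
    if h : IsSymTensor g n w then ⟨cl w, Submodule.subset_span ⟨w, h, rfl⟩⟩ else 0
  have htor : ∀ b : Ssub g n, 2 • b = 0 := by
    have : (LinearMap.id + LinearMap.id : Ssub g n →ₗ[ℤ] Ssub g n) = 0 := by
      refine span_ext ?_
      rintro _ ⟨w, hw, rfl⟩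
      refine Subtype.ext ?_
      change cl w + cl w = 0
      have := cl_rev w
      rw [hn.neg_one_pow, sym_cl hw, neg_one_smul] at this
      nth_rewrite 1 [← this]
      simp
    intro b
    rw [two_smul]
    exact LinearMap.congr_fun this b
  have prot : ∀ w, p (rot w) = p w := fun w => by
    by_cases h : IsSymTensor g n w
    · have h' := (sym_rot w).2 h
      simp only [p, dif_pos h, dif_pos h', ← dbl_rot, cl_rot]
    · have h' := mt (sym_rot w).1 h
      simp only [p, dif_neg h, dif_neg h']
  have prev : ∀ w, p (rev w) = p w := fun w => by
    by_cases h : IsSymTensor g n w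
    · have h' := (sym_rev w).2 h
      simp only [p, dif_pos h, dif_pos h', ← dbl_rev, h2]
    · have h' := mt (sym_rev w).1 h
      simp only [p, dif_neg h, dif_neg h']
  have qrot : ∀ w, q (rot w) = q w := fun w => by
    by_cases h : IsSymTensor g n w
    · have h' := (sym_rot w).2 h
      simp only [q, dif_pos h, dif_pos h', cl_rot]
    · have h' := mt (sym_rot w).1 h
      simp only [q, dif_neg h, dif_neg h']
  have qrev : ∀ w, q (rev w) = q w := fun w => by
    by_cases h : IsSymTensor g n w
    · have h' := (sym_rev w).2 h
      simp only [q, dif_pos h, dif_pos h', sym_cl h]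
    · have h' := mt (sym_rev w).1 h
      simp only [q, dif_neg h, dif_neg h']
  obtain ⟨D0, hD0⟩ := desc (fun w : DWord g n => p w ⊗ₜ[ℤ] (1 : ZMod 2))
    (fun w => by rw [prot])
    (fun w => by rw [prev, char_two tmul_two])
  obtain ⟨R0, hR0⟩ := pull q qrot qrev
  obtain ⟨R, hR⟩ := exists_lift htor (R0 ∘ₗ (PsSub g n).subtype)
  let D : Ssub g n →ₗ[ℤ] ((PsSub g n) ⊗[ℤ] ZMod 2) := D0 ∘ₗ (Ssub g n).subtype
  have hq : ∀ w, IsSymTensor g n w → (q w : DCoinv g n) = cl w := fun w h => by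
    simp only [q, dif_pos h]
  have hp : ∀ w, IsSymTensor g n w → (p w : DCoinv g (2 * n)) = cl (dblWord g n w) :=
    fun w h => by simp only [p, dif_pos h]
  have hDR : D ∘ₗ R = LinearMap.id := by
    refine tensor_ext fun a => ?_
    have : D ∘ₗ (R0 ∘ₗ (PsSub g n).subtype) = (TensorProduct.mk ℤ _ (ZMod 2)).flip 1 := by
      refine span_ext ?_
      rintro _ ⟨w, hw, rfl⟩
      have hw' := (sym_dbl w).1 hw
      change D0 (R0 (cl (dblWord g n w))) = _ ⊗ₜ 1
      rw [hR0, hq w hw', hD0]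
      congr 1
      exact Subtype.ext (hp w hw')
    rw [LinearMap.comp_apply, hR]
    exact LinearMap.congr_fun this a
  have hRD : R ∘ₗ D = LinearMap.id := by
    refine span_ext ?_
    rintro _ ⟨w, hw, rfl⟩
    change R (D0 (cl w)) = _
    rw [hD0, hR]
    change R0 (p w) = _
    rw [hp w hw, hR0]
    exact Subtype.ext (hq w hw)
  refine ⟨LinearEquiv.ofLinearMap D R hDR hRD, fun w hw => ?_⟩
  rw [LinearEquiv.coe_ofLinearMap]
  change LinearMap.rTensor (ZMod 2) (PsSub g n).subtype (D0 (cl w)) = _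
  rw [hD0, LinearMap.rTensor_tmul, Submodule.subtype_apply, hp w hw]

end Dbl

/-- For every `n ≥ 2` and `g ≥ 1` there are isomorphisms of abelian groups
`(H^{⊗n})_{D_{2n}} ⊗ M ≅ P_{2n} ⊗ M` and `S_n ≅ P^s_{2n} ⊗ M`, where `M = ℤ` if `n`
is even and `M = ℤ/2ℤ` if `n` is odd, both induced by the doubling assignment on basis
tensors `b_1⊗⋯⊗b_n ↦ b_1⊗⋯⊗b_n⊗b_1⊗⋯⊗b_n`.  (For `M = ℤ` the trivial tensor factor
is omitted; compatibility with doubling is expressed via the inclusions of `P_{2n}`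
and `P^s_{2n}` into `(H^{⊗2n})_{D_{4n}}`.) -/
theorem stmt_9 (g n : ℕ) (hg : 1 ≤ g) (hn : 2 ≤ n) :
    (Even n →
      (∃ e : DCoinv g n ≃ₗ[ℤ] Psub g n,
        ∀ w : DWord g n,
          (e (Submodule.Quotient.mk (Finsupp.single w 1)) : DCoinv g (2 * n)) =
            Submodule.Quotient.mk (Finsupp.single (dblWord g n w) 1)) ∧
      (∃ e : Ssub g n ≃ₗ[ℤ] PsSub g n,
        ∀ (w : DWord g n) (h : IsSymTensor g n w),
          (e ⟨Submodule.Quotient.mk (Finsupp.single w 1),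
              Submodule.subset_span ⟨w, h, rfl⟩⟩ : DCoinv g (2 * n)) =
            Submodule.Quotient.mk (Finsupp.single (dblWord g n w) 1))) ∧
    (Odd n →
      (∃ e : (DCoinv g n ⊗[ℤ] ZMod 2) ≃ₗ[ℤ] ((Psub g n) ⊗[ℤ] ZMod 2),
        ∀ w : DWord g n,
          LinearMap.rTensor (ZMod 2) (Psub g n).subtype
              (e ((Submodule.Quotient.mk (Finsupp.single w 1) : DCoinv g n) ⊗ₜ[ℤ]
                (1 : ZMod 2))) =
            (Submodule.Quotient.mk (Finsupp.single (dblWord g n w) 1) :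
              DCoinv g (2 * n)) ⊗ₜ[ℤ] (1 : ZMod 2)) ∧
      (∃ e : Ssub g n ≃ₗ[ℤ] ((PsSub g n) ⊗[ℤ] ZMod 2),
        ∀ (w : DWord g n) (h : IsSymTensor g n w),
          LinearMap.rTensor (ZMod 2) (PsSub g n).subtype
              (e ⟨Submodule.Quotient.mk (Finsupp.single w 1),
                Submodule.subset_span ⟨w, h, rfl⟩⟩) =
            (Submodule.Quotient.mk (Finsupp.single (dblWord g n w) 1) :
              DCoinv g (2 * n)) ⊗ₜ[ℤ] (1 : ZMod 2))) := by
  have : NeZero n := ⟨by omega⟩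
  exact ⟨fun h => ⟨Dbl.even_P g n h, Dbl.even_S g n h⟩,
    fun h => ⟨Dbl.odd_P g n, Dbl.odd_S g n h⟩⟩
end
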